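/- arXiv:1607.07174 — 6 statements merged into one kernel-verified Lean document; each statement's English description precedes it below -/
import Mathlib

section
/- For all integers k ≥ 1 and n ≥ 1 there exists a finite simple graph G with edge arboricity a'(G) = 2 and k-strong induced arboricity f_k(G) ≥ n. -/
open scoped Classical
open scoped Function

namespace InducedArboricity

/-- The edges of the subgraph of `G` induced by vertex set `S`, viewed as edges of `G`. -/
def forestEdges {V : Type*} (G : SimpleGraph V) (S : Set V) : Set (Sym2 V) :=
  {e | e ∈ G.edgeSet ∧ ∀ x ∈ e, x ∈ S}

/-- The number of edges of the connected component of `v` in `H`. -/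
noncomputable def compEdgeCount {W : Type*} (H : SimpleGraph W) (v : W) : ℕ :=
  {e | e ∈ H.edgeSet ∧ ∀ x ∈ e, H.Reachable v x}.ncard

/-- `S` induces a `k`-strong forest in `G`: the induced subgraph is acyclic and each of its
connected components has at least `k` edges. -/
def IsStrongForest {V : Type*} (G : SimpleGraph V) (k : ℕ) (S : Set V) : Prop :=
  (G.induce S).IsAcyclic ∧ ∀ v : S, k ≤ compEdgeCount (G.induce S) v

/-- An edge `e` of `G` is `k`-valid if it lies in some `k`-strong forest of `G`. -/
def KValid {V : Type*} (G : SimpleGraph V) (k : ℕ) (e : Sym2 V) : Prop :=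
  ∃ S : Set V, IsStrongForest G k S ∧ e ∈ forestEdges G S

/-- The `k`-strong induced arboricity: the least number of `k`-strong forests of `G`
covering all `k`-valid edges of `G`. -/
noncomputable def fStrong {V : Type*} (G : SimpleGraph V) (k : ℕ) : ℕ :=
  sInf {N | ∃ F : Fin N → Set V,
    (∀ i, IsStrongForest G k (F i)) ∧
    ∀ e : Sym2 V, KValid G k e → ∃ i, e ∈ forestEdges G (F i)}

/-- `G` is a `d`-shallow minor of `H`. -/
def IsShallowMinor {V W : Type*} (d : ℕ) (G : SimpleGraph V) (H : SimpleGraph W) : Prop :=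
  ∃ B : V → Set W,
    Pairwise (Disjoint on B) ∧
    (∀ v, ∃ c : B v, ∀ y : B v,
      (H.induce (B v)).Reachable c y ∧ (H.induce (B v)).dist c y ≤ d) ∧
    (∀ u v, G.Adj u v → ∃ x ∈ B u, ∃ y ∈ B v, H.Adj x y)

/-- A class of finite simple graphs, one set of graphs for each number of vertices. -/
def GraphClass : Type :=
  ∀ n : ℕ, Set (SimpleGraph (Fin n))

/-- A class of graphs has bounded expansion if for every `d` there is a constant `a` such that
every `d`-shallow minor of a member of the class has at most `a` times as many edges
as vertices. -/
def BoundedExpansion (C : GraphClass) : Prop :=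
  ∀ d : ℕ, ∃ a : ℕ, ∀ (m : ℕ) (G : SimpleGraph (Fin m)),
    (∃ n : ℕ, ∃ H ∈ C n, IsShallowMinor d G H) → G.edgeSet.ncard ≤ a * m

/-- A class of graphs is nowhere dense if for every `d` some graph is not a `d`-shallow minor
of any member of the class. -/
def NowhereDense (C : GraphClass) : Prop :=
  ∀ d : ℕ, ∃ (m : ℕ) (G : SimpleGraph (Fin m)), ¬ ∃ n : ℕ, ∃ H ∈ C n, IsShallowMinor d G H

/-- The closed neighborhood of `v` in `G`. -/
def closedNbr {V : Type*} (G : SimpleGraph V) (v : V) : Set V :=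
  insert v (G.neighborSet v)

/-- The sum of the labels over the closed neighborhood of `v`. -/
noncomputable def closedNbrSum {V : Type*} [Fintype V] (G : SimpleGraph V)
    (f : V → ℕ) (v : V) : ℕ :=
  ∑ x : V, if x ∈ closedNbr G v then f x else 0

/-- A labeling is distinguishing if adjacent vertices with different closed neighborhoods
receive different label sums over their closed neighborhoods. -/
def Distinguishing {V : Type*} [Fintype V] (G : SimpleGraph V) (f : V → ℕ) : Prop :=
  ∀ u v : V, G.Adj u v → closedNbr G u ≠ closedNbr G v →
    closedNbrSum G f u ≠ closedNbrSum G f v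

/-- The adjacent closed vertex-distinguishing number of `G`. -/
noncomputable def disNumber {V : Type*} [Fintype V] (G : SimpleGraph V) : ℕ :=
  sInf {L | 1 ≤ L ∧ ∃ f : V → ℕ, (∀ v, 1 ≤ f v ∧ f v ≤ L) ∧ Distinguishing G f}

/-- A proper coloring in which any two color classes together induce a forest. -/
def IsAcyclicColoring {V : Type*} (G : SimpleGraph V) {m : ℕ} (c : V → Fin m) : Prop :=
  (∀ u v : V, G.Adj u v → c u ≠ c v) ∧
  ∀ i j : Fin m, (G.induce {v | c v = i ∨ c v = j}).IsAcyclic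

/-- The acyclic chromatic number of `G`. -/
noncomputable def chiAcyc {V : Type*} (G : SimpleGraph V) : ℕ :=
  sInf {m | ∃ c : V → Fin m, IsAcyclicColoring G c}

/-- The edge arboricity of `G`: the least number of (not necessarily induced) forests
covering all edges of `G`. -/
noncomputable def arboricity {V : Type*} (G : SimpleGraph V) : ℕ :=
  sInf {N | ∃ F : Fin N → SimpleGraph V,
    (∀ i, F i ≤ G ∧ (F i).IsAcyclic) ∧
    ∀ e ∈ G.edgeSet, ∃ i, e ∈ (F i).edgeSet}

/-- `G` admits a tree decomposition of width at most `t`. -/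
def HasTreewidthAtMost {V : Type*} (G : SimpleGraph V) (t : ℕ) : Prop :=
  ∃ (ι : Type) (T : SimpleGraph ι) (B : ι → Finset V),
    T.IsTree ∧
    (∀ e ∈ G.edgeSet, ∃ i, ∀ x ∈ e, x ∈ B i) ∧
    (∀ v : V, (T.induce {i | v ∈ B i}).Connected) ∧
    (∀ i, (B i).card ≤ t + 1)

/-- The tree-width of `G`. -/
noncomputable def treewidth {V : Type*} (G : SimpleGraph V) : ℕ :=
  sInf {t | HasTreewidthAtMost G t}

/-- `G` has tree-depth at most `d`: there is a "forest order" on the vertices (the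
ancestor order of a rooted spanning forest) in which ancestor sets are chains of at most
`d` vertices and endpoints of edges of `G` are comparable.  Equivalently, every connected
component of `G` is a subgraph of the transitive closure of a rooted tree of depth `d`. -/
def HasTreedepthAtMost {V : Type*} (G : SimpleGraph V) (d : ℕ) : Prop :=
  ∃ le : V → V → Prop, IsPartialOrder V le ∧
    (∀ v : V, IsChain le {u | le u v}) ∧
    (∀ u v : V, G.Adj u v → le u v ∨ le v u) ∧
    (∀ v : V, {u | le u v}.ncard ≤ d)

/-- The tree-depth of `G`. -/
noncomputable def treedepth {V : Type*} (G : SimpleGraph V) : ℕ :=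
  sInf {d | HasTreedepthAtMost G d}

/-- `G` is a minor of `H`, witnessed by disjoint connected branch sets. -/
def IsMinorOf {V W : Type*} (G : SimpleGraph V) (H : SimpleGraph W) : Prop :=
  ∃ B : V → Set W,
    Pairwise (Disjoint on B) ∧
    (∀ v, (B v).Nonempty) ∧
    (∀ v, (H.induce (B v)).Connected) ∧
    (∀ u v, G.Adj u v → ∃ x ∈ B u, ∃ y ∈ B v, H.Adj x y)

/-- A class of graphs closed under taking minors. -/
def MinorClosed (C : GraphClass) : Prop :=
  ∀ (m n : ℕ) (G : SimpleGraph (Fin m)) (H : SimpleGraph (Fin n)),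
    H ∈ C n → IsMinorOf G H → G ∈ C m

/-- Planarity, via Wagner's characterization: no `K₅` and no `K₃,₃` minor. -/
def IsPlanar {V : Type*} (G : SimpleGraph V) : Prop :=
  ¬ IsMinorOf (SimpleGraph.completeGraph (Fin 5)) G ∧
  ¬ IsMinorOf (completeBipartiteGraph (Fin 3) (Fin 3)) G

lemma acyclic_of_star {V : Type*} (G : SimpleGraph V) (C : Set V)
    (h1 : ∀ u v, G.Adj u v → (u ∈ C ∧ v ∉ C) ∨ (u ∉ C ∧ v ∈ C))
    (h2 : ∀ u x y, u ∉ C → G.Adj u x → G.Adj u y → x = y) : G.IsAcyclic := by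
  intro v c hc
  obtain ⟨u, huC, hus⟩ : ∃ u, u ∉ C ∧ u ∈ c.support := by
    by_cases hv : v ∈ C
    · have hn : ¬ c.Nil := hc.not_nil
      refine ⟨c.snd, ?_, ?_⟩
      · rcases h1 _ _ (c.adj_snd hn) with h | h
        · exact h.2
        · exact absurd hv h.1
      · exact c.getVert_mem_support 1
    · exact ⟨v, hv, c.start_mem_support⟩
  have h := hc.ncard_neighborSet_toSubgraph_eq_two hus
  obtain ⟨x, y, hxy, hs⟩ := Set.ncard_eq_two.1 h
  have hx : x ∈ c.toSubgraph.neighborSet u := by rw [hs]; simp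
  have hy : y ∈ c.toSubgraph.neighborSet u := by rw [hs]; simp
  exact hxy (h2 u x y huC (c.toSubgraph.adj_sub hx) (c.toSubgraph.adj_sub hy))

lemma no_four {V : Type*} (G : SimpleGraph V) (hG : G.IsAcyclic) {x y s t : V}
    (hxy : x ≠ y) (hst : s ≠ t) (h1 : G.Adj x s) (h2 : G.Adj x t)
    (h3 : G.Adj y s) (h4 : G.Adj y t) : False := by
  let p : G.Walk x y := .cons h1 (.cons h3.symm .nil)
  let q : G.Walk x y := .cons h2 (.cons h4.symm .nil)
  have hp : p.IsPath := by
    simp [p, SimpleGraph.Walk.cons_isPath_iff, h1.ne, hxy, h3.ne']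
  have hq : q.IsPath := by
    simp [q, SimpleGraph.Walk.cons_isPath_iff, h2.ne, hxy, h4.ne']
  have := congrArg (fun r : G.Path x y => r.1.support) ((hG.subsingleton_path x y).elim ⟨p, hp⟩ ⟨q, hq⟩)
  simp [p, q] at this
  exact hst this

lemma star_valid {W : Type*} [Finite W] (G : SimpleGraph W) (k : ℕ) (x y : W) (T : Set W)
    (hT : ∀ t ∈ T, G.Adj x t) (hI : ∀ s ∈ T, ∀ t ∈ T, ¬ G.Adj s t)
    (hk : k ≤ T.ncard) (hy : y ∈ T) : KValid G k s(x, y) := by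
  have hxT : x ∉ T := fun h => (hT x h).ne rfl
  refine ⟨insert x T, ⟨?_, ?_⟩, ?_⟩
  · apply acyclic_of_star _ {v | v.1 = x}
    · rintro ⟨u, hu⟩ ⟨v, hv⟩ h
      simp only [SimpleGraph.comap_adj, Function.Embedding.subtype_apply,
        Set.mem_ofPred_eq] at h ⊢
      rcases hu with rfl | hu <;> rcases hv with rfl | hv
      · exact absurd rfl h.ne
      · exact Or.inl ⟨rfl, h.ne'⟩
      · exact Or.inr ⟨h.ne, rfl⟩
      · exact absurd h (hI _ hu _ hv)
    · rintro ⟨u, hu⟩ ⟨v, hv⟩ ⟨w, hw⟩ hC h h'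
      simp only [SimpleGraph.comap_adj, Function.Embedding.subtype_apply,
        Set.mem_ofPred_eq] at h h' hC
      have hu' : u ∈ T := hu.resolve_left hC
      have hv' : v = x := by
        rcases hv with hv | hv
        · exact hv
        · exact absurd h (hI _ hu' _ hv)
      have hw' : w = x := by
        rcases hw with hw | hw
        · exact hw
        · exact absurd h' (hI _ hu' _ hw)
      subst hv'; subst hw'; rfl
  · intro v
    set X : (insert x T : Set W) := ⟨x, Or.inl rfl⟩ with hX
    have hadj : ∀ t : T, (G.induce (insert x T)).Adj X ⟨t.1, Or.inr t.2⟩ := fun t => hT _ t.2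
    have hr : (G.induce (insert x T)).Reachable v X := by
      rcases v with ⟨v, rfl | hv⟩
      · rfl
      · exact (hadj ⟨v, hv⟩).symm.reachable
    refine hk.trans ?_
    unfold compEdgeCount
    rw [← Nat.card_coe_set_eq, ← Nat.card_coe_set_eq]
    refine Nat.card_le_card_of_injective
      (fun t : T => ⟨s(X, ⟨t.1, Or.inr t.2⟩), hadj t, ?_⟩) ?_
    · intro z hz
      rcases Sym2.mem_iff.1 hz with rfl | rfl
      · exact hr
      · exact hr.trans (hadj t).reachable
    · intro s t hst
      have := congrArg Subtype.val hst
      simp only [Sym2.congr_right] at this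
      exact Subtype.ext (congrArg (fun z => z.1) this)
  · refine ⟨hT y hy, ?_⟩
    intro z hz
    rcases Sym2.mem_iff.1 hz with rfl | rfl
    · exact Or.inl rfl
    · exact Or.inr hy

/-- Disjoint union of stars with centres in `A`. -/
def starG {A U : Type*} (p : U → A) : SimpleGraph (A ⊕ U) where
  Adj x y := (∃ u, x = .inl (p u) ∧ y = .inr u) ∨ (∃ u, y = .inl (p u) ∧ x = .inr u)
  symm := ⟨fun _ _ h => h.symm⟩
  loopless := ⟨by rintro x (⟨u, h, h'⟩ | ⟨u, h, h'⟩) <;> simp [h] at h'⟩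

lemma starG_acyclic {A U : Type*} (p : U → A) : (starG p).IsAcyclic := by
  apply acyclic_of_star _ (Set.range Sum.inl)
  · rintro u v (⟨u, rfl, rfl⟩ | ⟨u, rfl, rfl⟩) <;> simp
  · rintro u x y hu (⟨a, rfl, rfl⟩ | ⟨a, rfl, rfl⟩) (⟨b, h, rfl⟩ | ⟨b, rfl, h⟩)
    · simp at hu
    · simp at hu
    · simp at h
    · simp at h; rw [h]

lemma fStrong_ge {W : Type*} [Finite W] (G : SimpleGraph W) (k n : ℕ)
    (h : ∀ N, N < n → ∀ F : Fin N → Set W, (∀ i, IsStrongForest G k (F i)) →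
      (∀ e : Sym2 W, KValid G k e → ∃ i, e ∈ forestEdges G (F i)) → False) :
    n ≤ fStrong G k := by
  apply le_csInf
  · let E := {e : Sym2 W // KValid G k e}
    have : Finite (Sym2 W) := inferInstance
    let f : E ≃ Fin (Nat.card E) := Finite.equivFin E
    choose S hS1 hS2 using fun x : E => x.2
    refine ⟨Nat.card E, fun i => S (f.symm i), fun i => hS1 _, ?_⟩
    intro e he
    refine ⟨f ⟨e, he⟩, ?_⟩
    simpa using hS2 ⟨e, he⟩
  · rintro N ⟨F, h1, h2⟩
    by_contra hN
    exact h N (not_le.1 hN) F h1 h2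

/-- For all integers `k ≥ 1` and `n ≥ 1` there is a finite simple graph `G`
with edge arboricity `a'(G) = 2` and `f_k(G) ≥ n`. -/
theorem exists_arboricity_two_fStrong_ge (k n : ℕ) (hk : 1 ≤ k) (hn : 1 ≤ n) :
    ∃ (m : ℕ) (G : SimpleGraph (Fin m)), arboricity G = 2 ∧ n ≤ fStrong G k := by
  let A := Fin (2 ^ n + 1)
  let U := A × A × Fin (n + k)
  let e : Fin (Fintype.card (A ⊕ U)) ≃ A ⊕ U := (Fintype.equivFin _).symm
  let p1 : U → A := fun u => u.1
  let p2 : U → A := fun u => u.2.1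
  let G1 := (starG p1).comap e
  let G2 := (starG p2).comap e
  have ac : ∀ p : U → A, ((starG p).comap e).IsAcyclic := fun p =>
    (starG_acyclic p).comap (SimpleGraph.Hom.comap _ _) e.injective
  let a : A → Fin (Fintype.card (A ⊕ U)) := fun i => e.symm (.inl i)
  let s : U → Fin (Fintype.card (A ⊕ U)) := fun i => e.symm (.inr i)
  have a_inj : Function.Injective a := e.symm.injective.comp Sum.inl_injective
  have s_inj : Function.Injective s := e.symm.injective.comp Sum.inr_injective
  let G := G1 ⊔ G2
  have adj1 : ∀ u, G.Adj (a (p1 u)) (s u) := fun u => Or.inl (by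
    simp [G1, starG, a, s])
  have adj2 : ∀ u, G.Adj (a (p2 u)) (s u) := fun u => Or.inr (by
    simp [G2, starG, a, s])
  have nadj : ∀ u v, ¬ G.Adj (s u) (s v) := by
    rintro u v (h | h) <;> simp [G1, G2, starG, s] at h
  refine ⟨_, G, ?_, ?_⟩
  · have hmem : 2 ∈ {N | ∃ F : Fin N → SimpleGraph (Fin (Fintype.card (A ⊕ U))),
        (∀ i, F i ≤ G ∧ (F i).IsAcyclic) ∧ ∀ e ∈ G.edgeSet, ∃ i, e ∈ (F i).edgeSet} := by
      refine ⟨![G1, G2], ?_, ?_⟩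
      · intro i
        fin_cases i
        · exact ⟨le_sup_left, ac p1⟩
        · exact ⟨le_sup_right, ac p2⟩
      · intro e he
        rw [SimpleGraph.edgeSet_sup] at he
        rcases he with he | he
        · exact ⟨0, he⟩
        · exact ⟨1, he⟩
    apply le_antisymm (Nat.sInf_le hmem)
    apply le_csInf ⟨2, hmem⟩
    rintro N ⟨F, hF, hc⟩
    by_contra hN
    let i0 : A := ⟨0, by positivity⟩
    let i1 : A := ⟨1, by have : 0 < 2 ^ n := by positivity
                         omega⟩
    have h01 : i0 ≠ i1 := fun h => zero_ne_one (congrArg Fin.val h)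
    let t : Fin (n + k) := ⟨0, by omega⟩
    have hsub : Subsingleton (Fin N) := by
      rw [Fin.subsingleton_iff_le_one]; omega
    obtain ⟨c, hcc⟩ := hc s(_, _) (adj1 (i0, i1, t))
    have key : ∀ x y, G.Adj x y → (F c).Adj x y := by
      intro x y h
      obtain ⟨d, hd⟩ := hc s(x, y) h
      rw [Subsingleton.elim c d]; exact hd
    refine no_four (F c) (hF c).2 (x := a i0) (y := a i1) (s := s (i0, i1, t))
      (t := s (i1, i0, t)) (a_inj.ne h01)
      (s_inj.ne fun h => h01 (congrArg (fun u : U => u.1) h))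
      (key _ _ (adj1 (i0, i1, t))) (key _ _ (adj2 (i1, i0, t)))
      (key _ _ (adj2 (i0, i1, t))) (key _ _ (adj1 (i1, i0, t)))
  · have valid : ∀ i u, G.Adj (a i) (s u) → KValid G k s(a i, s u) := by
      intro i u h
      refine star_valid G k _ _ (insert (s u) (Set.range fun t => s (i, i, t))) ?_ ?_ ?_
        (Or.inl rfl)
      · rintro _ (rfl | ⟨t, rfl⟩)
        · exact h
        · exact adj1 (i, i, t)
      · rintro _ (rfl | ⟨t, rfl⟩) _ (rfl | ⟨t, rfl⟩) <;> exact nadj _ _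
      · have h1 : (Set.range fun t : Fin (n + k) => s (i, i, t)).ncard = n + k := by
          rw [← Set.image_univ, Set.ncard_image_of_injective]
          · simp
          · intro t t' h
            exact congrArg (fun u : U => u.2.2) (s_inj h)
        have h2 := Set.ncard_le_ncard
          (Set.subset_insert (s u) (Set.range fun t : Fin (n + k) => s (i, i, t)))
          (Set.toFinite _)
        omega
    apply fStrong_ge
    intro N hN F hF hc
    obtain ⟨i, j, hij, hl⟩ := Fintype.exists_ne_map_eq_of_card_lt
      (fun i : A => (Finset.univ.filter fun c => a i ∈ F c : Finset (Fin N))) (by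
        simp only [Fintype.card_finset, Fintype.card_fin, A]
        have : 2 ^ N ≤ 2 ^ n := Nat.pow_le_pow_right (by norm_num) hN.le
        omega)
    have hl' : ∀ c, a i ∈ F c → a j ∈ F c := by
      intro c h
      have := Finset.ext_iff.1 hl c
      simpa [h] using this
    choose χ hχ using fun t => hc _ (valid i (i, j, t) (adj1 (i, j, t)))
    obtain ⟨t, t', htt, hcol⟩ := Fintype.exists_ne_map_eq_of_card_lt χ (by
      simp; omega)
    have hai : a i ∈ F (χ t) := (hχ t).2 _ (Sym2.mem_mk_left _ _)
    have hst : s (i, j, t) ∈ F (χ t) := (hχ t).2 _ (Sym2.mem_mk_right _ _)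
    have hst' : s (i, j, t') ∈ F (χ t) := by
      rw [hcol]; exact (hχ t').2 _ (Sym2.mem_mk_right _ _)
    refine no_four _ (hF (χ t)).1 (x := ⟨a i, hai⟩) (y := ⟨a j, hl' _ hai⟩)
      (s := ⟨_, hst⟩) (t := ⟨_, hst'⟩) ?_ ?_ (adj1 (i, j, t)) (adj1 (i, j, t'))
      (adj2 (i, j, t)) (adj2 (i, j, t'))
    · intro h
      exact hij (a_inj (congrArg Subtype.val h))
    · intro h
      have := s_inj (congrArg Subtype.val h)
      exact htt (congrArg (fun u : U => u.2.2) this)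

end InducedArboricity
end

section
/- For all integers k ≥ 1 and n ≥ 1 there exists a finite simple graph G with f_k(G) ≤ 3 and f_{k+1}(G) ≥ n. -/
open scoped Classical
open scoped Function

namespace InducedArboricity

/-- Acyclicity from a parent relation with decreasing rank. -/
lemma acyclic_of_parent {W : Type*} (H : SimpleGraph W) (P : W → W → Prop) (r : W → ℕ)
    (hf : ∀ u v w, P u v → P u w → v = w) (hr : ∀ u v, P u v → r v < r u)
    (hadj : ∀ u v, H.Adj u v → P u v ∨ P v u) : H.IsAcyclic := by
  have key : ∀ u v, P u v → ¬ (H.deleteEdges {s(u, v)}).Reachable u v := by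
    intro u v huv hre
    have hrank : ∀ a b, Relation.ReflTransGen P a b → r b ≤ r a := by
      intro a b h
      induction h with
      | refl => exact le_rfl
      | tail _ h ih => exact (hr _ _ h).le.trans ih
    have hv : ¬ Relation.ReflTransGen P v u := fun h => by
      have h1 := hrank _ _ h
      have h2 := hr _ _ huv
      omega
    have hinv : ∀ x, (H.deleteEdges {s(u, v)}).Reachable u x → Relation.ReflTransGen P x u := by
      intro x hx
      rw [SimpleGraph.reachable_iff_reflTransGen] at hx
      induction hx with
      | refl => exact .refl
      | @tail b c _ hbc ih =>
        rw [SimpleGraph.deleteEdges_adj] at hbc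
        rcases hadj _ _ hbc.1 with h | h
        · rcases Relation.ReflTransGen.cases_head ih with h' | ⟨d, hd, h'⟩
          · subst h'
            have := hf _ _ _ h huv
            subst this
            exact absurd rfl hbc.2
          · rwa [hf _ _ _ h hd]
        · exact .head h ih
    exact hv (hinv v hre)
  rw [SimpleGraph.isAcyclic_iff_forall_isBridge]
  intro e
  induction e with
  | h u v =>
    intro he
    rw [SimpleGraph.isBridge_iff]
    rcases hadj _ _ he with h | h
    · exact key u v h
    · intro hre
      apply key v u h
      rw [Sym2.eq_swap]
      exact hre.symm

lemma le_compEdgeCount_of_star {W ι : Type*} [Finite W] [Fintype ι] (H : SimpleGraph W) (v c : W)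
    (f : ι → W) (hf : Function.Injective f) (hc : ∀ t, H.Adj c (f t)) (hv : H.Reachable v c) :
    Fintype.card ι ≤ compEdgeCount H v := by
  unfold compEdgeCount
  have hinj : Function.Injective (fun t => s(c, f t)) := by
    intro a b hab
    apply hf
    exact Sym2.congr_right.1 hab
  calc Fintype.card ι = (Set.range (fun t => s(c, f t))).ncard := by
        rw [← Set.image_univ, Set.ncard_image_of_injective _ hinj, Set.ncard_univ,
          Nat.card_eq_fintype_card]
    _ ≤ _ := by
        apply Set.ncard_le_ncard _ (Set.toFinite _)
        rintro _ ⟨t, rfl⟩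
        refine ⟨hc t, ?_⟩
        intro x hx
        rcases Sym2.mem_iff.1 hx with rfl | rfl
        · exact hv
        · exact hv.trans (hc t).reachable

lemma compEdgeCount_iso {W W' : Type*} {H : SimpleGraph W} {H' : SimpleGraph W'} (φ : H ≃g H')
    (v : W) : compEdgeCount H' (φ v) = compEdgeCount H v := by
  unfold compEdgeCount
  rw [← Set.ncard_image_of_injective _ (Sym2.map.injective φ.injective)]
  congr 1
  ext e
  constructor
  · induction e with
    | h a b =>
      rintro ⟨h1, h2⟩
      refine ⟨s(φ.symm a, φ.symm b), ⟨?_, ?_⟩, by simp⟩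
      · simpa using φ.symm.map_adj_iff.2 h1
      · intro x hx
        rw [← SimpleGraph.Iso.reachable_iff (φ := φ)]
        apply h2
        rcases Sym2.mem_iff.1 hx with rfl | rfl <;> simp
  · rintro ⟨e, ⟨h1, h2⟩, rfl⟩
    induction e with
    | h a b =>
      refine ⟨φ.map_adj_iff.2 h1, ?_⟩
      intro x hx
      rcases Sym2.mem_iff.1 hx with rfl | rfl
      · exact (SimpleGraph.Iso.reachable_iff).2 (h2 a (by simp))
      · exact (SimpleGraph.Iso.reachable_iff).2 (h2 b (by simp))

lemma IsStrongForest.preimage {V V' : Type*} {G : SimpleGraph V} {G' : SimpleGraph V'}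
    (φ : G ≃g G') {k : ℕ} {S : Set V'} (h : IsStrongForest G' k S) :
    IsStrongForest G k (φ ⁻¹' S) := by
  let ψ : G.induce (φ ⁻¹' S) ≃g G'.induce S :=
    { toFun := fun x => ⟨φ x.1, x.2⟩
      invFun := fun y => ⟨φ.symm y.1, by simp⟩
      left_inv := fun x => by simp
      right_inv := fun y => by simp
      map_rel_iff' := by
        intro a b
        exact φ.map_adj_iff }
  refine ⟨ψ.isAcyclic_iff.2 h.1, fun v => ?_⟩
  rw [← compEdgeCount_iso ψ]
  exact h.2 _

lemma mem_forestEdges_preimage {V V' : Type*} {G : SimpleGraph V} {G' : SimpleGraph V'}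
    (φ : G ≃g G') (S : Set V') (e : Sym2 V) :
    e ∈ forestEdges G (φ ⁻¹' S) ↔ e.map φ ∈ forestEdges G' S := by
  induction e with
  | h a b =>
    simp only [forestEdges, Set.mem_ofPred_eq, SimpleGraph.mem_edgeSet, Sym2.map_mk, Sym2.mem_iff,
      forall_eq_or_imp, forall_eq, Set.mem_preimage]
    rw [φ.map_adj_iff]

lemma cover_iso {V V' : Type*} {G : SimpleGraph V} {G' : SimpleGraph V'} (φ : G ≃g G')
    (k N : ℕ) (h : ∃ F : Fin N → Set V', (∀ i, IsStrongForest G' k (F i)) ∧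
      ∀ e : Sym2 V', KValid G' k e → ∃ i, e ∈ forestEdges G' (F i)) :
    ∃ F : Fin N → Set V, (∀ i, IsStrongForest G k (F i)) ∧
      ∀ e : Sym2 V, KValid G k e → ∃ i, e ∈ forestEdges G (F i) := by
  obtain ⟨F, h1, h2⟩ := h
  refine ⟨fun i => φ ⁻¹' F i, fun i => (h1 i).preimage φ, ?_⟩
  rintro e ⟨S, hS, he⟩
  obtain ⟨i, hi⟩ := h2 (e.map φ) ⟨φ.symm ⁻¹' S, hS.preimage φ.symm, by
    rw [mem_forestEdges_preimage, Sym2.map_map]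
    convert he
    have : (φ.symm ∘ φ : V → V) = id := by ext; simp
    rw [this]; simp⟩
  exact ⟨i, (mem_forestEdges_preimage φ _ _).2 hi⟩

lemma fStrong_iso {V V' : Type*} {G : SimpleGraph V} {G' : SimpleGraph V'} (φ : G ≃g G')
    (k : ℕ) : fStrong G k = fStrong G' k := by
  unfold fStrong
  congr 1
  ext N
  exact ⟨cover_iso φ.symm k N, cover_iso φ k N⟩

lemma exists_cover {V : Type*} [Finite V] (G : SimpleGraph V) (k : ℕ) :
    ∃ N, ∃ F : Fin N → Set V, (∀ i, IsStrongForest G k (F i)) ∧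
      ∀ e : Sym2 V, KValid G k e → ∃ i, e ∈ forestEdges G (F i) := by
  let X := {e : Sym2 V // KValid G k e}
  obtain ⟨N, ⟨ε⟩⟩ := Finite.exists_equiv_fin X
  refine ⟨N, fun i => (ε.symm i).2.choose, fun i => (ε.symm i).2.choose_spec.1, ?_⟩
  intro e he
  refine ⟨ε ⟨e, he⟩, ?_⟩
  have := (ε.symm (ε ⟨e, he⟩)).2.choose_spec.2
  convert this
  simp

/-- Vertices: originals, star centres and star leaves (one star for each ordered pair). -/
inductive Vx (N k : ℕ) : Type
  | o (i : Fin N) : Vx N k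
  | c (i j : Fin N) : Vx N k
  | l (i j : Fin N) (t : Fin k) : Vx N k

namespace Vx

instance (N k : ℕ) : Finite (Vx N k) := by
  let f : Vx N k → Fin N ⊕ (Fin N × Fin N) ⊕ (Fin N × Fin N × Fin k) := fun v =>
    match v with
    | o i => .inl i
    | c i j => .inr (.inl (i, j))
    | l i j t => .inr (.inr (i, j, t))
  apply Finite.of_injective f
  intro a b h
  cases a <;> cases b <;> simp_all [f]

/-- Oriented adjacency. -/
def arc {N k : ℕ} : Vx N k → Vx N k → Prop
  | o i, c i' _ => i = i'
  | c i j, l i' j' _ => i = i' ∧ j = j'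
  | l _ j t, o j' => j = j' ∧ t.val = 0
  | _, _ => False

/-- The graph. -/
def gr (N k : ℕ) : SimpleGraph (Vx N k) where
  Adj u v := arc u v ∨ arc v u
  symm := ⟨fun _ _ h => h.symm⟩
  loopless := ⟨fun v => by cases v <;> simp [arc]⟩

/-- Parent relation for most forests. -/
def par {N k : ℕ} : Vx N k → Vx N k → Prop
  | c i _, o i' => i = i'
  | l i j _, c i' j' => i = i' ∧ j = j'
  | _, _ => False

/-- Rank. -/
def rk {N k : ℕ} : Vx N k → ℕ
  | o _ => 0
  | c _ _ => 1
  | l _ _ _ => 2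

lemma acyclic1 {N k : ℕ} (S : Set (Vx N k))
    (hS : ∀ i j t, t.val = 0 → o j ∈ S → l i j t ∉ S) : ((gr N k).induce S).IsAcyclic := by
  apply acyclic_of_parent _ (fun u v => par u.1 v.1) (fun u => rk u.1)
  · rintro ⟨u, hu⟩ ⟨v, hv⟩ ⟨w, hw⟩ h1 h2
    cases u <;> cases v <;> cases w <;> simp_all [par]
  · rintro ⟨u, hu⟩ ⟨v, hv⟩ h1
    cases u <;> cases v <;> simp_all [par, rk]
  · rintro ⟨u, hu⟩ ⟨v, hv⟩ h1
    replace h1 : arc u v ∨ arc v u := h1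
    cases u <;> cases v <;> simp_all [par, arc]
    · exact hS _ _ _ h1.2 hu (h1.1 ▸ hv)
    · exact hS _ _ _ h1.2 hv (h1.1 ▸ hu)

lemma acyclic2 {N k : ℕ} (S : Set (Vx N k)) (hS : ∀ i j, c i j ∉ S) :
    ((gr N k).induce S).IsAcyclic := by
  apply acyclic_of_parent _ (fun u v => arc u.1 v.1) (fun u => rk u.1)
  · rintro ⟨u, hu⟩ ⟨v, hv⟩ ⟨w, hw⟩ h1 h2
    cases u <;> cases v <;> cases w <;> simp only [arc] at h1 h2 <;>
      first | exact absurd hu (hS _ _) | exact absurd hv (hS _ _) | (congr; exact h1.1.symm.trans h2.1)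
  · rintro ⟨u, hu⟩ ⟨v, hv⟩ h1
    cases u <;> cases v <;> simp only [arc] at h1 <;>
      first | exact absurd hu (hS _ _) | exact absurd hv (hS _ _) | simp [rk]
  · rintro ⟨u, hu⟩ ⟨v, hv⟩ h1
    exact h1

/-- Originals, centres and nonspecial leaves. -/
def S1 (N k : ℕ) : Set (Vx N k) := {v | ∀ i j t, v = l i j t → t.val ≠ 0}
/-- Originals and special leaves. -/
def S2 (N k : ℕ) : Set (Vx N k) :=
  {v | (∀ i j, v ≠ c i j) ∧ ∀ i j t, v = l i j t → t.val = 0}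
/-- Everything but the originals. -/
def S3 (N k : ℕ) : Set (Vx N k) := {v | ∀ i, v ≠ o i}
/-- One star with one original. -/
def S4 (N k : ℕ) (i j : Fin N) : Set (Vx N k) :=
  {v | v = o i ∨ v = c i j ∨ ∃ t, v = l i j t}

lemma strong1 {N k : ℕ} (hk : 1 ≤ k) : IsStrongForest (gr N k) k (S1 N k) := by
  refine ⟨acyclic1 _ (fun i j t ht _ h => h i j t rfl ht), ?_⟩
  have star : ∀ i j (v : S1 N k),
      ((gr N k).induce (S1 N k)).Reachable v ⟨c i j, by simp [S1]⟩ →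
      k ≤ compEdgeCount ((gr N k).induce (S1 N k)) v := by
    intro i j v hv
    have := le_compEdgeCount_of_star ((gr N k).induce (S1 N k)) v ⟨c i j, by simp [S1]⟩
      (fun t : Fin k => if h : t.val = 0 then ⟨o i, by simp [S1]⟩
        else ⟨l i j t, by rintro _ _ _ h'; cases h'; exact h⟩) ?_ ?_ hv
    · simpa using this
    · intro a b hab
      have hab' := congrArg Subtype.val hab
      by_cases ha : a.val = 0 <;> by_cases hb : b.val = 0 <;> simp [ha, hb] at hab'
      · exact Fin.ext (ha.trans hb.symm)
      · exact hab'
    · intro t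
      by_cases ha : t.val = 0 <;> simp [ha, gr, arc]
  rintro ⟨v, hv⟩
  cases v with
  | o i =>
    apply star i i
    apply SimpleGraph.Adj.reachable
    simp [gr, arc]
  | c i j => exact star i j _ (.refl _)
  | l i j t =>
    apply star i j
    apply SimpleGraph.Adj.reachable
    simp [gr, arc]

lemma strong2 {N k : ℕ} (hk : 1 ≤ k) (hN : k ≤ N) : IsStrongForest (gr N k) k (S2 N k) := by
  refine ⟨acyclic2 _ (fun i j h => h.1 i j rfl), ?_⟩
  have star : ∀ j (v : S2 N k),
      ((gr N k).induce (S2 N k)).Reachable v ⟨o j, by simp [S2]⟩ →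
      k ≤ compEdgeCount ((gr N k).induce (S2 N k)) v := by
    intro j v hv
    have := le_compEdgeCount_of_star ((gr N k).induce (S2 N k)) v ⟨o j, by simp [S2]⟩
      (fun i : Fin N => ⟨l i j ⟨0, hk⟩, ⟨by simp, by rintro _ _ _ h'; cases h'; rfl⟩⟩) ?_ ?_ hv
    · exact hN.trans (by simpa using this)
    · intro a b hab
      have hab' := congrArg Subtype.val hab
      simpa using hab'
    · intro t
      simp [gr, arc]
  rintro ⟨v, hv⟩
  cases v with
  | o i => exact star i _ (.refl _)
  | c i j => exact absurd rfl (hv.1 i j)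
  | l i j t =>
    apply star j
    apply SimpleGraph.Adj.reachable
    simp [gr, arc, hv.2 i j t rfl]

lemma strong3 {N k : ℕ} : IsStrongForest (gr N k) k (S3 N k) := by
  refine ⟨acyclic1 _ (fun i j t ht h _ => h j rfl), ?_⟩
  have star : ∀ i j (v : S3 N k),
      ((gr N k).induce (S3 N k)).Reachable v ⟨c i j, by simp [S3]⟩ →
      k ≤ compEdgeCount ((gr N k).induce (S3 N k)) v := by
    intro i j v hv
    have := le_compEdgeCount_of_star ((gr N k).induce (S3 N k)) v ⟨c i j, by simp [S3]⟩
      (fun t : Fin k => ⟨l i j t, by simp [S3]⟩) ?_ ?_ hv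
    · simpa using this
    · intro a b hab
      have hab' := congrArg Subtype.val hab
      simpa using hab'
    · intro t
      simp [gr, arc]
  rintro ⟨v, hv⟩
  cases v with
  | o i => exact absurd rfl (hv i)
  | c i j => exact star i j _ (.refl _)
  | l i j t =>
    apply star i j
    apply SimpleGraph.Adj.reachable
    simp [gr, arc]

lemma strong4 {N k : ℕ} (i j : Fin N) (hij : i ≠ j) :
    IsStrongForest (gr N k) (k + 1) (S4 N k i j) := by
  refine ⟨acyclic1 _ ?_, ?_⟩
  · intro i' j' t _ h h'
    simp [S4] at h h'
    exact hij (h.symm.trans h'.2)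
  have star : ∀ (v : S4 N k i j),
      ((gr N k).induce (S4 N k i j)).Reachable v ⟨c i j, by simp [S4]⟩ →
      k + 1 ≤ compEdgeCount ((gr N k).induce (S4 N k i j)) v := by
    intro v hv
    have := le_compEdgeCount_of_star ((gr N k).induce (S4 N k i j)) v ⟨c i j, by simp [S4]⟩
      (fun t : Option (Fin k) => t.elim ⟨o i, by simp [S4]⟩ (fun t => ⟨l i j t, by simp [S4]⟩))
      ?_ ?_ hv
    · simpa using this
    · intro a b hab
      have hab' := congrArg Subtype.val hab
      cases a <;> cases b <;> simp at hab' ⊢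
      exact hab'
    · intro t
      cases t <;> simp [gr, arc]
  rintro ⟨v, hv⟩
  rcases hv with rfl | rfl | ⟨t, rfl⟩
  · apply star
    apply SimpleGraph.Adj.reachable
    simp [gr, arc]
  · exact star _ (.refl _)
  · apply star
    apply SimpleGraph.Adj.reachable
    simp [gr, arc]

lemma mem_fe {N k : ℕ} (S : Set (Vx N k)) (a b : Vx N k) :
    s(a, b) ∈ forestEdges (gr N k) S ↔ (gr N k).Adj a b ∧ a ∈ S ∧ b ∈ S := by
  simp [forestEdges]

lemma fk_le {N k : ℕ} (hk : 1 ≤ k) (hN : k ≤ N) : fStrong (gr N k) k ≤ 3 := by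
  apply Nat.sInf_le
  refine ⟨![S1 N k, S2 N k, S3 N k], ?_, ?_⟩
  · intro i
    fin_cases i
    · exact strong1 hk
    · exact strong2 hk hN
    · exact strong3
  · rintro e ⟨S, -, he, -⟩
    have key : ∀ a b : Vx N k, arc a b →
        ∃ i, s(a, b) ∈ forestEdges (gr N k) (![S1 N k, S2 N k, S3 N k] i) := by
      intro a b h
      have hg : (gr N k).Adj a b := Or.inl h
      cases a <;> cases b <;> simp only [arc] at h
      · exact ⟨0, (mem_fe _ _ _).2 ⟨hg, by simp [S1], by simp [S1]⟩⟩
      · exact ⟨2, (mem_fe _ _ _).2 ⟨hg, by simp [S3], by simp [S3]⟩⟩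
      · exact ⟨1, (mem_fe _ _ _).2 ⟨hg, ⟨by simp, by rintro _ _ _ h'; cases h'; exact h.2⟩,
          by simp [S2]⟩⟩
    induction e with
    | h a b =>
      rcases he with h | h
      · exact key a b h
      · rw [Sym2.eq_swap]
        exact key b a h

/-- A component with at least `k+1` edges which contains a star centre contains an original. -/
lemma orig_mem {N k : ℕ} {S : Set (Vx N k)} (hS : IsStrongForest (gr N k) (k + 1) S)
    (i j : Fin N) (hc : c i j ∈ S) : o i ∈ S ∨ o j ∈ S := by
  by_contra! hno
  have h := hS.2 ⟨c i j, hc⟩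
  unfold compEdgeCount at h
  rw [← Set.ncard_image_of_injective _ (Sym2.map.injective Subtype.val_injective)] at h
  have hreach : ∀ x : S, ((gr N k).induce S).Reachable ⟨c i j, hc⟩ x →
      x.1 = c i j ∨ ∃ t, x.1 = l i j t := by
    intro x hx
    rw [SimpleGraph.reachable_iff_reflTransGen] at hx
    induction hx with
    | refl => exact Or.inl rfl
    | @tail b d _ hbd ih =>
      obtain ⟨b, hb⟩ := b
      obtain ⟨d, hd⟩ := d
      replace hbd : arc b d ∨ arc d b := hbd
      simp only at ih ⊢
      rcases ih with rfl | ⟨t, rfl⟩ <;> cases d <;> simp_all [arc]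
  have hsub : (Sym2.map Subtype.val '' {e | e ∈ ((gr N k).induce S).edgeSet ∧
      ∀ x ∈ e, ((gr N k).induce S).Reachable ⟨c i j, hc⟩ x}) ⊆
      (fun t : Fin k => s(c i j, l i j t)) '' Set.univ := by
    rintro _ ⟨e, ⟨he, hx⟩, rfl⟩
    induction e with
    | h a b =>
      have ha := hreach a (hx a (by simp))
      have hb := hreach b (hx b (by simp))
      obtain ⟨a, ha'⟩ := a
      obtain ⟨b, hb'⟩ := b
      replace he : arc a b ∨ arc b a := he
      simp only at ha hb
      rcases ha with rfl | ⟨t, rfl⟩ <;> rcases hb with rfl | ⟨t', rfl⟩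
      · simp [arc] at he
      · exact ⟨t', trivial, rfl⟩
      · exact ⟨t, trivial, Sym2.eq_swap⟩
      · simp [arc] at he
  have h1 := Set.ncard_le_ncard hsub (Set.toFinite _)
  have h2 := Set.ncard_image_le (f := fun t : Fin k => s((c i j : Vx N k), l i j t))
    (Set.toFinite Set.univ)
  rw [Set.ncard_univ, Nat.card_eq_fintype_card, Fintype.card_fin] at h2
  exact absurd (h.trans (h1.trans h2)) (by omega)

lemma le_pow {N k M : ℕ} (hk : 1 ≤ k) (F : Fin M → Set (Vx N k))
    (h1 : ∀ t, IsStrongForest (gr N k) (k + 1) (F t))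
    (h2 : ∀ e, KValid (gr N k) (k + 1) e → ∃ t, e ∈ forestEdges (gr N k) (F t)) :
    N ≤ 3 ^ M := by
  have hcol : ∀ t, ((gr N k).induce (F t)).Colorable 2 := fun t => (h1 t).1.colorable_two
  let C : ∀ t, ((gr N k).induce (F t)).Coloring (Fin 2) := fun t => (hcol t).some
  let col : Fin N → Fin M → Option (Fin 2) := fun i t =>
    if h : o i ∈ F t then some (C t ⟨o i, h⟩) else none
  have hinj : Function.Injective col := by
    intro i j hij
    by_contra hne
    let z : Fin k := ⟨0, hk⟩
    have hadj : (gr N k).Adj (c i j) (l i j z) := by simp [gr, arc]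
    obtain ⟨t, ht⟩ := h2 s(c i j, l i j z) ⟨S4 N k i j, strong4 i j hne,
      (mem_fe _ _ _).2 ⟨hadj, by simp [S4], by simp [S4]⟩⟩
    obtain ⟨-, hc, hl⟩ := (mem_fe _ _ _).1 ht
    have hor := orig_mem (h1 t) i j hc
    have hct := congrFun hij t
    by_cases hi : o i ∈ F t <;> by_cases hj : o j ∈ F t <;> simp [col, hi, hj] at hct hor
    have e1 := (C t).valid (v := ⟨o i, hi⟩) (w := ⟨c i j, hc⟩) (by simp [gr, arc])
    have e2 := (C t).valid (v := ⟨c i j, hc⟩) (w := ⟨l i j z, hl⟩) (by simp [gr, arc])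
    have e3 := (C t).valid (v := ⟨l i j z, hl⟩) (w := ⟨o j, hj⟩) (by simp [gr, arc, z])
    rw [← hct] at e3
    generalize C t ⟨o i, hi⟩ = x at *
    generalize C t ⟨c i j, hc⟩ = y at *
    generalize C t ⟨l i j z, hl⟩ = w at *
    omega
  have := Fintype.card_le_of_injective col hinj
  simpa using this

end Vx

/-- For all integers `k ≥ 1` and `n ≥ 1` there is a finite simple graph `G`
with `f_k(G) ≤ 3` and `f_{k+1}(G) ≥ n`. -/
theorem exists_fStrong_le_three_fStrong_succ_ge (k n : ℕ) (hk : 1 ≤ k) (hn : 1 ≤ n) :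
    ∃ (m : ℕ) (G : SimpleGraph (Fin m)), fStrong G k ≤ 3 ∧ n ≤ fStrong G (k + 1) := by
  have hfin : Finite (Vx (3 ^ n + k) k) := inferInstance
  obtain ⟨m, ⟨ε⟩⟩ := Finite.exists_equiv_fin (Vx (3 ^ n + k) k)
  let φ := SimpleGraph.Iso.map ε (Vx.gr (3 ^ n + k) k)
  refine ⟨m, _, (fStrong_iso φ k).symm.le.trans (Vx.fk_le hk (Nat.le_add_left _ _)), ?_⟩
  rw [← fStrong_iso φ (k + 1)]
  refine le_csInf (exists_cover _ _) ?_
  rintro M ⟨F, h1, h2⟩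
  by_contra! hlt
  have h3 := Vx.le_pow hk F h1 h2
  have h4 : 3 ^ M ≤ 3 ^ n := Nat.pow_le_pow_right (by norm_num) hlt.le
  omega
end InducedArboricity
end

section
/- For all integers k ≥ 1 and n ≥ 1 there exists a finite simple graph G with f_k(G) ≥ n and f_{k+1}(G) = 0 (i.e., G has no (k+1)-valid edges). -/
open scoped Classical
open scoped Function

namespace InducedArboricity

/-- The clique on `0` and `{v | k ≤ v}` with pendant leaves `1, …, k - 1` attached at `0`. -/
def brush (k n : ℕ) : SimpleGraph (Fin (k + n)) where
  Adj u v := u ≠ v ∧ (u.val = 0 ∨ v.val = 0 ∨ (k ≤ u.val ∧ k ≤ v.val))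
  symm := ⟨fun u v h => ⟨h.1.symm, by have := h.2; tauto⟩⟩
  loopless := ⟨fun u h => h.1 rfl⟩

lemma no_triangle {V : Type*} {G : SimpleGraph V} {S : Set V} (h : (G.induce S).IsAcyclic)
    {a b c : V} (ha : a ∈ S) (hb : b ∈ S) (hc : c ∈ S) (hab : G.Adj a b) (hac : G.Adj a c)
    (hbc : G.Adj b c) : False := by
  have h3 := h.cliqueFree le_rfl
  refine h3 {⟨a, ha⟩, ⟨b, hb⟩, ⟨c, hc⟩} ?_
  rw [SimpleGraph.is3Clique_triple_iff]
  exact ⟨hab, hac, hbc⟩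

lemma acyclic_card {V : Type*} [Finite V] [Nonempty V] (H : SimpleGraph V) (h : H.IsAcyclic) :
    H.edgeSet.ncard + 1 ≤ Nat.card V := by
  obtain ⟨T, hle, -, hTT⟩ :=
    (SimpleGraph.connected_top (V := V)).exists_isTree_le_of_le_of_isAcyclic (le_top (a := H)) h
  have h2 := (SimpleGraph.isTree_iff_connected_and_card.1 hTT).2
  have h3 : H.edgeSet.ncard ≤ T.edgeSet.ncard :=
    Set.ncard_le_ncard (SimpleGraph.edgeSet_mono hle) (Set.toFinite _)
  rw [Nat.card_coe_set_eq] at h2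
  omega

lemma brush_acyclic_card (k n : ℕ) (hk : 1 ≤ k) (S : Set (Fin (k + n)))
    (h : ((brush k n).induce S).IsAcyclic) : S.ncard ≤ k + 1 := by
  have h1 : (S ∩ {v | v.val = 0 ∨ k ≤ v.val}).ncard ≤ 2 := by
    by_contra hc
    rw [not_le, Set.two_lt_ncard (Set.toFinite _)] at hc
    obtain ⟨a, ha, b, hb, c, hc, hab, hac, hbc⟩ := hc
    have e1 := ha.2
    have e2 := hb.2
    have e3 := hc.2
    simp only [Set.mem_ofPred_eq] at e1 e2 e3
    exact no_triangle h ha.1 hb.1 hc.1 ⟨hab, by tauto⟩ ⟨hac, by tauto⟩ ⟨hbc, by tauto⟩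
  have h2 : (S ∩ {v | ¬ (v.val = 0 ∨ k ≤ v.val)}).ncard ≤ k - 1 := by
    have : (S ∩ {v | ¬ (v.val = 0 ∨ k ≤ v.val)}).ncard ≤ ((Finset.Ico 1 k : Finset ℕ) : Set ℕ).ncard := by
      apply Set.ncard_le_ncard_of_injOn (fun v => v.val)
      · intro v hv
        have := hv.2
        simp only [Set.mem_ofPred_eq] at this
        simp only [Finset.coe_Ico, Set.mem_Ico]
        omega
      · intro a _ b _ hab
        exact Fin.ext hab
    rw [Set.ncard_coe_finset] at this
    simpa using this
  have h3 : S ⊆ (S ∩ {v | v.val = 0 ∨ k ≤ v.val}) ∪ (S ∩ {v | ¬ (v.val = 0 ∨ k ≤ v.val)}) := by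
    intro v hv
    by_cases hh : v.val = 0 ∨ k ≤ v.val
    · exact Or.inl ⟨hv, hh⟩
    · exact Or.inr ⟨hv, hh⟩
  have h4 := Set.ncard_le_ncard h3 (Set.toFinite _)
  have h5 := Set.ncard_union_le (S ∩ {v | v.val = 0 ∨ k ≤ v.val})
    (S ∩ {v | ¬ (v.val = 0 ∨ k ≤ v.val)})
  omega

lemma brush_not_kvalid (k n : ℕ) (hk : 1 ≤ k) (e : Sym2 (Fin (k + n))) :
    ¬ KValid (brush k n) (k + 1) e := by
  rintro ⟨S, ⟨hac, hcomp⟩, he, heS⟩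
  induction e with
  | h x y =>
    have hx : x ∈ S := heS x (by simp)
    have : Nonempty S := ⟨⟨x, hx⟩⟩
    have h1 := hcomp ⟨x, hx⟩
    have h2 := acyclic_card _ hac
    have h3 := brush_acyclic_card k n hk S hac
    have h4 : compEdgeCount ((brush k n).induce S) ⟨x, hx⟩ ≤
        ((brush k n).induce S).edgeSet.ncard :=
      Set.ncard_le_ncard (fun e he => he.1) (Set.toFinite _)
    rw [Nat.card_coe_set_eq] at h2
    omega

/-- The star with centre `0`, the leaves, and one further clique vertex. -/
def starSet (k n : ℕ) (j : Fin n) : Set (Fin (k + n)) := {v | v.val < k ∨ v = Fin.natAdd k j}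

lemma starSet_ncard (k n : ℕ) (j : Fin n) : (starSet k n j).ncard = k + 1 := by
  have : starSet k n j =
      insert (Fin.natAdd k j) ((Finset.univ.map (Fin.castAddEmb n) : Finset (Fin (k + n))) :
        Set (Fin (k + n))) := by
    ext v
    simp only [starSet, Set.mem_ofPred_eq, Set.mem_insert_iff, Finset.coe_map, Set.mem_image,
      Finset.coe_univ, Set.mem_univ, true_and]
    constructor
    · rintro (h | h)
      · exact Or.inr ⟨⟨v, h⟩, rfl⟩
      · exact Or.inl h
    · rintro (h | ⟨w, rfl⟩)
      · exact Or.inr h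
      · exact Or.inl w.2
  rw [this, Set.ncard_insert_of_notMem, Set.ncard_coe_finset]
  · simp
  · simp only [Finset.coe_map, Set.mem_image, not_exists, not_and]
    intro w _ hw
    have := congrArg Fin.val hw
    have := w.2
    simp at *
    omega

lemma starSet_strong (k n : ℕ) (hk : 1 ≤ k) (j : Fin n) :
    IsStrongForest (brush k n) k (starSet k n j) := by
  have hz : (⟨0, by omega⟩ : Fin (k + n)) ∈ starSet k n j := Or.inl hk
  have heq : (brush k n).induce (starSet k n j) = SimpleGraph.starGraph ⟨⟨0, by omega⟩, hz⟩ := by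
    ext ⟨u, hu⟩ ⟨v, hv⟩
    simp only [SimpleGraph.comap_adj, SimpleGraph.starGraph_adj, Function.Embedding.subtype_apply,
      brush, ne_eq, Subtype.mk.injEq, Fin.ext_iff]
    simp only [starSet, Set.mem_ofPred_eq, Fin.ext_iff, Fin.val_natAdd] at hu hv
    omega
  have ht : ((brush k n).induce (starSet k n j)).IsTree := heq ▸ SimpleGraph.isTree_starGraph _
  refine ⟨ht.isAcyclic, fun v => ?_⟩
  have h2 := (SimpleGraph.isTree_iff_connected_and_card.1 ht).2
  rw [Nat.card_coe_set_eq, Nat.card_coe_set_eq, starSet_ncard] at h2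
  have : compEdgeCount ((brush k n).induce (starSet k n j)) v =
      ((brush k n).induce (starSet k n j)).edgeSet.ncard := by
    unfold compEdgeCount
    congr 1
    ext e
    exact ⟨fun h => h.1, fun h => ⟨h, fun x _ => ht.connected.preconnected v x⟩⟩
  omega

lemma brush_lower (k n : ℕ) (hk : 1 ≤ k) : n ≤ fStrong (brush k n) k := by
  have hne : {N | ∃ F : Fin N → Set (Fin (k + n)),
    (∀ i, IsStrongForest (brush k n) k (F i)) ∧
    ∀ e, KValid (brush k n) k e → ∃ i, e ∈ forestEdges (brush k n) (F i)}.Nonempty := by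
    let T := {S : Set (Fin (k + n)) // IsStrongForest (brush k n) k S}
    let φ := Finite.equivFin T
    refine ⟨Nat.card T, fun i => (φ.symm i).1, fun i => (φ.symm i).2, ?_⟩
    rintro e ⟨S, hS, he⟩
    exact ⟨φ ⟨S, hS⟩, by simpa using he⟩
  obtain ⟨F, hF, hcov⟩ := Nat.sInf_mem hne
  have key : ∀ j : Fin n, ∃ i, s((⟨0, by omega⟩ : Fin (k + n)), Fin.natAdd k j) ∈
      forestEdges (brush k n) (F i) := by
    intro j
    refine hcov _ ⟨starSet k n j, starSet_strong k n hk j, ?_, ?_⟩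
    · refine ⟨?_, Or.inl rfl⟩
      simp only [ne_eq, Fin.ext_iff, Fin.val_natAdd]
      omega
    · intro x hx
      rcases Sym2.mem_iff.1 hx with rfl | rfl
      · exact Or.inl hk
      · exact Or.inr rfl
  choose g hg using key
  have hinj : Function.Injective g := by
    intro a b hab
    by_contra hne
    have ha := hg a
    have hb := hg b
    rw [← hab] at hb
    refine no_triangle (hF (g a)).1 (ha.2 _ (Sym2.mem_mk_left _ _)) (ha.2 _ (Sym2.mem_mk_right _ _))
      (hb.2 _ (Sym2.mem_mk_right _ _)) ha.1 hb.1 ⟨?_, Or.inr (Or.inr ⟨?_, ?_⟩)⟩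
    · simpa [Fin.ext_iff] using hne
    · simp
    · simp
  simpa [fStrong] using Fintype.card_le_of_injective g hinj

/-- For all integers `k ≥ 1` and `n ≥ 1` there is a finite simple graph `G`
with `f_k(G) ≥ n` and `f_{k+1}(G) = 0`, i.e. `G` has no `(k+1)`-valid edges. -/
theorem exists_fStrong_ge_fStrong_succ_eq_zero (k n : ℕ) (hk : 1 ≤ k) (hn : 1 ≤ n) :
    ∃ (m : ℕ) (G : SimpleGraph (Fin m)),
      n ≤ fStrong G k ∧ fStrong G (k + 1) = 0 ∧ ∀ e : Sym2 (Fin m), ¬ KValid G (k + 1) e := by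
  refine ⟨k + n, brush k n, brush_lower k n hk, ?_, brush_not_kvalid k n hk⟩
  refine Nat.sInf_eq_zero.2 (Or.inl ⟨fun i => i.elim0, fun i => i.elim0, fun e he => ?_⟩)
  exact absurd he (brush_not_kvalid k n hk e)
end InducedArboricity
end

section
/- For every integer k ≥ 1 there exists a finite simple graph G and an induced subgraph H of G such that f_k(G) = 3 and f_k(H) ≥ k. -/
open scoped Classical
open scoped Function

namespace InducedArboricity

theorem strong_image {V W : Type*} {G : SimpleGraph V} {G' : SimpleGraph W} (f : G ↪g G')
    (k : ℕ) (T : Set V) : IsStrongForest G' k (f '' T) ↔ IsStrongForest G k T := by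
  let e : T ≃ (f '' T) := Equiv.Set.image f T f.injective
  let g : G.induce T ≃g G'.induce (f '' T) :=
    { toEquiv := e
      map_rel_iff' := by
        intro a b
        simp [e, SimpleGraph.comap_adj] }
  have hc : ∀ v : T, compEdgeCount (G'.induce (f '' T)) (g v) = compEdgeCount (G.induce T) v := by
    intro v
    unfold compEdgeCount
    have hinj : Function.Injective (Sym2.map g) := Sym2.map.injective g.injective
    rw [← Set.ncard_image_of_injective _ hinj]
    congr 1
    ext x
    induction x using Sym2.inductionOn with
    | hf a b =>
      obtain ⟨a, rfl⟩ := g.surjective a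
      obtain ⟨b, rfl⟩ := g.surjective b
      rw [← Sym2.map_mk, hinj.mem_set_image]
      have h1 : (G'.induce (f '' T)).Adj (g a) (g b) ↔ (G.induce T).Adj a b := g.map_adj_iff
      have h2 : ∀ x, (G'.induce (f '' T)).Reachable (g v) (g x) ↔ (G.induce T).Reachable v x :=
        fun x => g.reachable_iff
      rw [Sym2.map_mk, Set.mem_ofPred_eq, Set.mem_ofPred_eq, Sym2.ball, Sym2.ball,
        SimpleGraph.mem_edgeSet, SimpleGraph.mem_edgeSet, h1, h2, h2]
  unfold IsStrongForest
  rw [← g.isAcyclic_iff]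
  refine and_congr_right fun _ => ⟨fun h v => ?_, fun h v => ?_⟩
  · rw [← hc]; exact h _
  · obtain ⟨v, rfl⟩ := g.surjective v
    rw [hc]; exact h v

theorem forestEdges_image {V W : Type*} {G : SimpleGraph V} {G' : SimpleGraph W} (f : G ↪g G')
    (T : Set V) (e : Sym2 V) : Sym2.map f e ∈ forestEdges G' (f '' T) ↔ e ∈ forestEdges G T := by
  induction e using Sym2.inductionOn with
  | hf a b => simp [forestEdges]

theorem le_fStrong {V W : Type*} [Finite V] {G : SimpleGraph V} {G' : SimpleGraph W}
    (f : G ↪g G') (k c : ℕ) (E : Fin c → Sym2 W)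
    (hE : ∀ i, ∃ T ⊆ Set.range f, IsStrongForest G' k T ∧ E i ∈ forestEdges G' T)
    (hT : ∀ T ⊆ Set.range f, IsStrongForest G' k T → ∀ i j, E i ∈ forestEdges G' T →
      E j ∈ forestEdges G' T → i = j) : c ≤ fStrong G k := by
  apply le_csInf
  · have : Finite {S : Set V // IsStrongForest G k S} := inferInstance
    obtain ⟨n, ⟨e⟩⟩ := Finite.exists_equiv_fin {S : Set V // IsStrongForest G k S}
    refine ⟨n, fun i => (e.symm i).1, fun i => (e.symm i).2, ?_⟩
    rintro x ⟨S, hS, hx⟩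
    exact ⟨e ⟨S, hS⟩, by simpa using hx⟩
  · rintro N ⟨F, hF, hcov⟩
    have key : ∀ i, ∃ j, E i ∈ forestEdges G' (f '' F j) := by
      intro i
      obtain ⟨T, hTr, hTs, hTe⟩ := hE i
      obtain ⟨T, rfl⟩ := Set.subset_range_iff_exists_image_eq.1 hTr
      have : ∃ e, Sym2.map f e = E i := by
        generalize E i = x at hTe
        induction x using Sym2.inductionOn with
        | hf a b =>
          obtain ⟨a', -, rfl⟩ := hTe.2 a (by simp)
          obtain ⟨b', -, rfl⟩ := hTe.2 b (by simp)
          exact ⟨s(a', b'), rfl⟩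
      obtain ⟨e, he⟩ := this
      rw [← he, forestEdges_image] at hTe
      obtain ⟨j, hj⟩ := hcov e ⟨T, (strong_image f k T).1 hTs, hTe⟩
      exact ⟨j, by rwa [← he, forestEdges_image]⟩
    choose g hg using key
    have : Function.Injective g := by
      intro a b hab
      refine hT (f '' F (g a)) (Set.image_subset_range _ _) ((strong_image f k _).2 (hF _)) a b
        (hg a) ?_
      rw [hab]; exact hg b
    simpa using Fintype.card_le_of_injective g this

theorem fStrong_le {V W : Type*} {G : SimpleGraph V} {G' : SimpleGraph W}
    (f : G ↪g G') (k N : ℕ) (F : Fin N → Set W) (hF : ∀ i, F i ⊆ Set.range f)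
    (hs : ∀ i, IsStrongForest G' k (F i))
    (hc : ∀ a ∈ Set.range f, ∀ b ∈ Set.range f, G'.Adj a b → ∃ i, a ∈ F i ∧ b ∈ F i) :
    fStrong G k ≤ N := by
  apply Nat.sInf_le
  have : ∀ i, ∃ T, f '' T = F i := fun i => Set.subset_range_iff_exists_image_eq.1 (hF i)
  choose T hT using this
  refine ⟨T, fun i => ?_, ?_⟩
  · rw [← strong_image f, hT]; exact hs i
  · rintro e ⟨S, -, he⟩
    induction e using Sym2.inductionOn with
    | hf a b =>
      have hab : G.Adj a b := he.1
      obtain ⟨i, h1, h2⟩ := hc (f a) ⟨a, rfl⟩ (f b) ⟨b, rfl⟩ (by simpa using hab)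
      refine ⟨i, ?_⟩
      rw [← forestEdges_image f, hT]
      exact ⟨by simpa using hab, by simp [h1, h2]⟩

/-- Acyclicity criterion. -/
theorem acyclic_of_rank {W : Type*} (H : SimpleGraph W) (r : W → ℕ)
    (h : ∀ v a b, H.Adj v a → H.Adj v b → r a ≤ r v → r b ≤ r v → a = b) : H.IsAcyclic := by
  intro v c hc
  obtain ⟨u, hu, hmax⟩ := c.support.toFinset.exists_max_image r ⟨v, by simp⟩
  have hu' : u ∈ c.support := by simpa using hu
  have hc' := hc.rotate hu'
  have hmem : ∀ x ∈ (c.rotate u hu').support, r x ≤ r u := by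
    intro x hx
    apply hmax
    have := (SimpleGraph.Walk.mem_support_rotate_iff c u hu').1 hx
    simpa using this
  apply hc'.snd_ne_penultimate
  apply h u
  · exact SimpleGraph.Walk.adj_snd hc'.not_nil
  · exact (SimpleGraph.Walk.adj_penultimate hc'.not_nil).symm
  · exact hmem _ (SimpleGraph.Walk.getVert_mem_support _ _)
  · exact hmem _ (SimpleGraph.Walk.getVert_mem_support _ _)

theorem not_triangle {W : Type*} (G : SimpleGraph W) (S : Set W) (h : (G.induce S).IsAcyclic)
    (a b c : W) (hab : G.Adj a b) (hbc : G.Adj b c) (hac : G.Adj a c)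
    (ha : a ∈ S) (hb : b ∈ S) (hc : c ∈ S) : False := by
  have h1 : (G.induce S).Adj ⟨a, ha⟩ ⟨b, hb⟩ := hab
  have h2 : (G.induce S).Adj ⟨b, hb⟩ ⟨c, hc⟩ := hbc
  have h3 : (G.induce S).Adj ⟨c, hc⟩ ⟨a, ha⟩ := hac.symm
  refine h (SimpleGraph.Walk.cons h1 (.cons h2 (.cons h3 .nil))) ?_
  have := hab.ne; have := hbc.ne; have := hac.ne
  simp [SimpleGraph.Walk.isCycle_def, SimpleGraph.Walk.isTrail_def]
  grind

/-- Vertices: spine, tips of triangles, and pendant vertices of both. -/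
inductive Vx_s7 : Type
  | p (i : ℕ) | l (i : ℕ) | pp (i j : ℕ) | lp (i j : ℕ)

/-- One direction of the adjacency. -/
def rel : Vx_s7 → Vx_s7 → Prop
  | .p i, .p j => j = i + 1
  | .p i, .l j => i = j ∨ i = j + 1
  | .p i, .pp a _ => i = a
  | .l i, .lp a _ => i = a
  | _, _ => False

/-- The big infinite graph. -/
def GG : SimpleGraph Vx_s7 where
  Adj a b := rel a b ∨ rel b a
  symm := ⟨fun _ _ h => h.symm⟩
  loopless := ⟨fun a h => by cases a <;> simp [rel] at h⟩

/-- The rank used for acyclicity. -/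
def rk : Vx_s7 → ℕ
  | .p i => i
  | .l i => i + 2
  | .pp i _ => i + 1
  | .lp i _ => i + 3

theorem GG_acyclic (S : Set Vx_s7)
    (hS : ∀ i, Vx_s7.p i ∈ S → Vx_s7.p (i + 1) ∈ S → Vx_s7.l i ∈ S → False) :
    (GG.induce S).IsAcyclic := by
  apply acyclic_of_rank _ (fun v => rk v.1)
  rintro ⟨v, hv⟩ ⟨a, ha⟩ ⟨b, hb⟩ h1 h2 h3 h4
  simp only [SimpleGraph.comap_adj, Function.Embedding.subtype_apply, GG] at h1 h2
  rw [Subtype.mk.injEq]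
  cases v <;> cases a <;> simp [rel] at h1 <;> cases b <;> simp [rel] at h2 <;>
    simp [rk] at h3 h4 ⊢ <;> grind

theorem GG_no_tri (S : Set Vx_s7) (h : (GG.induce S).IsAcyclic) (i : ℕ)
    (h1 : Vx_s7.p i ∈ S) (h2 : Vx_s7.p (i + 1) ∈ S) (h3 : Vx_s7.l i ∈ S) : False :=
  not_triangle GG S h (.p i) (.p (i + 1)) (.l i) (by simp [GG, rel]) (by simp [GG, rel])
    (by simp [GG, rel]) h1 h2 h3

theorem le_count {W : Type*} (H : SimpleGraph W) [Finite W] (v : W) (k : ℕ)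
    (g : Fin k → Sym2 W) (hg : Function.Injective g) (h1 : ∀ i, g i ∈ H.edgeSet)
    (h2 : ∀ i, ∀ x ∈ g i, H.Reachable v x) : k ≤ compEdgeCount H v := by
  unfold compEdgeCount
  have : (Set.range g).ncard = k := by
    rw [← Set.image_univ, Set.ncard_image_of_injective _ hg]; simp [Set.ncard_univ]
  rw [← this]
  apply Set.ncard_le_ncard _ (Set.toFinite _)
  rintro _ ⟨i, rfl⟩
  exact ⟨h1 i, h2 i⟩

/-- Core vertices. -/
def core (k : ℕ) : Set Vx_s7 := {v | match v with
  | .p i => i ≤ 2 * k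
  | .l i => i < 2 * k
  | _ => False}

/-- All vertices, pendant ones included. -/
def full (k : ℕ) : Set Vx_s7 := {v | match v with
  | .p i => i ≤ 2 * k
  | .l i => i < 2 * k
  | .pp i j => i ≤ 2 * k ∧ j < k
  | .lp i j => i < 2 * k ∧ j < k}

theorem full_finite (k : ℕ) : (full k).Finite := by
  have hp := (Set.finite_Iic (2 * k)).image Vx_s7.p
  have hl := (Set.finite_Iio (2 * k)).image Vx_s7.l
  have hpp := ((Set.finite_Iic (2 * k)).prod (Set.finite_Iio k)).image (fun x => Vx_s7.pp x.1 x.2)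
  have hlp := ((Set.finite_Iio (2 * k)).prod (Set.finite_Iio k)).image (fun x => Vx_s7.lp x.1 x.2)
  refine (((hp.union hl).union hpp).union hlp).subset ?_
  intro v hv
  cases v <;> simpa [full] using hv

theorem core_sub (k : ℕ) : core k ⊆ full k := by
  intro v hv
  cases v <;> simp_all [full, core]

/-- The part of `full k` whose core parts satisfy the predicates. -/
def part (k : ℕ) (P : ℕ → Prop) (L : Prop) : Set Vx_s7 := {v | v ∈ full k ∧ match v with
  | .p i => P i
  | .l _ => L
  | .pp i _ => P i
  | .lp _ _ => L}

theorem part_strong (k : ℕ) (P : ℕ → Prop) (L : Prop) (h : ∀ i, P i → P (i + 1) → L → False) :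
    IsStrongForest GG k (part k P L) := by
  have hfin : Finite (part k P L) := ((full_finite k).subset (fun v hv => hv.1)).to_subtype
  constructor
  · apply GG_acyclic
    intro i h1 h2 h3
    exact h i h1.2 h2.2 h3.2
  · have hp : ∀ i, ∀ hi : Vx_s7.p i ∈ part k P L, ∀ v,
        (GG.induce (part k P L)).Reachable v ⟨.p i, hi⟩ →
        k ≤ compEdgeCount (GG.induce (part k P L)) v := by
      intro i hi v hv
      have hm : ∀ j : Fin k, Vx_s7.pp i j ∈ part k P L := by
        intro j; exact ⟨⟨hi.1, j.2⟩, hi.2⟩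
      have ha : ∀ j : Fin k, (GG.induce (part k P L)).Adj ⟨.p i, hi⟩ ⟨.pp i j, hm j⟩ := by
        intro j; simp [GG, rel]
      refine le_count _ _ _ (fun j => s(⟨.p i, hi⟩, ⟨.pp i j, hm j⟩)) ?_ ?_ ?_
      · intro a b hab
        simp at hab
        exact Fin.ext hab
      · intro j; exact ha j
      · intro j x hx
        rcases Sym2.mem_iff.1 hx with rfl | rfl
        · exact hv
        · exact hv.trans (ha j).reachable
    have hl : ∀ i, ∀ hi : Vx_s7.l i ∈ part k P L, ∀ v,
        (GG.induce (part k P L)).Reachable v ⟨.l i, hi⟩ →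
        k ≤ compEdgeCount (GG.induce (part k P L)) v := by
      intro i hi v hv
      have hm : ∀ j : Fin k, Vx_s7.lp i j ∈ part k P L := by
        intro j; exact ⟨⟨hi.1, j.2⟩, hi.2⟩
      have ha : ∀ j : Fin k, (GG.induce (part k P L)).Adj ⟨.l i, hi⟩ ⟨.lp i j, hm j⟩ := by
        intro j; simp [GG, rel]
      refine le_count _ _ _ (fun j => s(⟨.l i, hi⟩, ⟨.lp i j, hm j⟩)) ?_ ?_ ?_
      · intro a b hab
        simp at hab
        exact Fin.ext hab
      · intro j; exact ha j
      · intro j x hx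
        rcases Sym2.mem_iff.1 hx with rfl | rfl
        · exact hv
        · exact hv.trans (ha j).reachable
    rintro ⟨v, hv⟩
    cases v with
    | p i => exact hp i hv _ (.refl _)
    | l i => exact hl i hv _ (.refl _)
    | pp i j =>
      have hi : Vx_s7.p i ∈ part k P L := by simp_all [part, full]
      refine hp i hi _ (SimpleGraph.Adj.reachable ?_)
      simp [GG, rel]
    | lp i j =>
      have hi : Vx_s7.l i ∈ part k P L := by simp_all [part, full]
      refine hl i hi _ (SimpleGraph.Adj.reachable ?_)
      simp [GG, rel]

/-- The three forests. -/
def three (k : ℕ) : Fin 3 → Set Vx_s7 :=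
  ![part k (fun _ => True) False, part k Even True, part k Odd True]

theorem three_sub (k : ℕ) (i : Fin 3) : three k i ⊆ full k := by
  fin_cases i <;> exact fun v hv => hv.1

theorem three_strong (k : ℕ) (i : Fin 3) : IsStrongForest GG k (three k i) := by
  fin_cases i
  · exact part_strong k _ _ (fun _ _ _ h => h)
  · exact part_strong k _ _ (fun i h1 h2 _ => by grind)
  · exact part_strong k _ _ (fun i h1 h2 _ => by grind)

theorem three_cover (k : ℕ) (a b : Vx_s7) (ha : a ∈ full k) (hb : b ∈ full k) (h : GG.Adj a b) :
    ∃ i, a ∈ three k i ∧ b ∈ three k i := by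
  wlog hr : rel a b generalizing a b
  · obtain ⟨i, h1, h2⟩ := this b a hb ha h.symm (h.resolve_left hr)
    exact ⟨i, h2, h1⟩
  rw [Fin.exists_fin_succ, Fin.exists_fin_succ, Fin.exists_fin_succ]
  have e0 : three k 0 = part k (fun _ => True) False := rfl
  have e1 : three k (Fin.succ 0) = part k Even True := rfl
  have e2 : three k (Fin.succ (Fin.succ 0)) = part k Odd True := rfl
  rw [e0, e1, e2]
  cases a <;> cases b <;> simp [rel] at hr <;> simp [part, ha, hb] <;> grind

theorem G_eq_three {V : Type*} [Finite V] {G : SimpleGraph V} (f : G ↪g GG) (k : ℕ) (hk : 1 ≤ k)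
    (hf : Set.range f = full k) : fStrong G k = 3 := by
  apply le_antisymm
  · exact fStrong_le f k 3 (three k) (by rw [hf]; exact three_sub k) (three_strong k)
      (by rw [hf]; exact fun a ha b hb h => three_cover k a b ha hb h)
  · have m0 : Vx_s7.p 0 ∈ full k := by simp [full]
    have m1 : Vx_s7.p 1 ∈ full k := by simp [full]; omega
    have m2 : Vx_s7.l 0 ∈ full k := by simp [full]; omega
    refine le_fStrong f k 3 ![s(.p 0, .p 1), s(.p 0, .l 0), s(.p 1, .l 0)] ?_ ?_
    · have key : ∀ a b, a ∈ full k → b ∈ full k → GG.Adj a b →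
          ∃ T ⊆ Set.range f, IsStrongForest GG k T ∧ s(a, b) ∈ forestEdges GG T := by
        intro a b ha hb hab
        obtain ⟨i, h1, h2⟩ := three_cover k a b ha hb hab
        refine ⟨three k i, by rw [hf]; exact three_sub k i, three_strong k i, hab, ?_⟩
        simp [h1, h2]
      intro i
      fin_cases i
      · exact key _ _ m0 m1 (by simp [GG, rel])
      · exact key _ _ m0 m2 (by simp [GG, rel])
      · exact key _ _ m1 m2 (by simp [GG, rel])
    · intro T _ hT i j hi hj
      have := GG_no_tri T hT.1 0
      fin_cases i <;> fin_cases j <;> simp [forestEdges] at hi hj ⊢ <;> simp_all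

/-- Path from the beginning of the spine to the tip `l i`. -/
def pth (i : ℕ) : Set Vx_s7 := {v | match v with
  | .p j => j ≤ i
  | .l j => j = i
  | _ => False}

theorem pth_strong (k i : ℕ) (hki : k ≤ i) (hik : i < 2 * k) :
    pth i ⊆ core k ∧ IsStrongForest GG k (pth i) := by
  have hsub : pth i ⊆ core k := by
    intro v hv
    cases v <;> simp [pth, core] at hv ⊢ <;> omega
  have hfin : Finite (pth i) := ((full_finite k).subset (hsub.trans (core_sub k))).to_subtype
  refine ⟨hsub, GG_acyclic _ ?_, ?_⟩
  · intro j h1 h2 h3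
    simp [pth] at h1 h2 h3
    omega
  · have hm : ∀ j, j ≤ i → Vx_s7.p j ∈ pth i := fun j hj => hj
    have hr : ∀ j, ∀ hj : j ≤ i, (GG.induce (pth i)).Reachable ⟨.p 0, hm 0 (by omega)⟩
        ⟨.p j, hm j hj⟩ := by
      intro j
      induction j with
      | zero => intro _; exact .refl _
      | succ j ih =>
        intro hj
        refine (ih (by omega)).trans (SimpleGraph.Adj.reachable ?_)
        simp [GG, rel]
    have hall : ∀ v : pth i, (GG.induce (pth i)).Reachable v ⟨.p 0, hm 0 (by omega)⟩ := by
      rintro ⟨v, hv⟩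
      cases v with
      | p j => exact (hr j hv).symm
      | l j =>
        refine SimpleGraph.Reachable.trans (SimpleGraph.Adj.reachable ?_) (hr i le_rfl).symm
        have : j = i := hv
        simp [GG, rel, this]
      | pp a b => exact hv.elim
      | lp a b => exact hv.elim
    intro v
    refine le_count _ _ _ (fun j : Fin k => s(⟨.p j, hm j (by omega)⟩,
      ⟨.p (j + 1), hm (j + 1) (by omega)⟩)) ?_ ?_ ?_
    · intro a b hab
      simp at hab
      apply Fin.ext
      omega
    · intro j
      simp [GG, rel]
    · intro j x _
      exact (hall v).trans (hall x).symm

/-- Index of the triangle containing an edge of the core. -/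
def lab : Vx_s7 → Vx_s7 → ℕ
  | .p i, .p j => min i j
  | .p _, .l j => j
  | .l j, .p _ => j
  | _, _ => 0

/-- `lab` on unordered pairs. -/
def lab2 : Sym2 Vx_s7 → ℕ := Sym2.lift ⟨lab, by
  intro a b; cases a <;> cases b <;> simp [lab, Nat.min_comm]⟩

theorem core_conflict (k : ℕ) (T : Set Vx_s7) (hT : T ⊆ core k) (hs : IsStrongForest GG k T)
    (i j : ℕ) (hki : k ≤ i) (hij : i < j) (hjk : j < 2 * k)
    (h1 : Vx_s7.p i ∈ T) (h2 : Vx_s7.l i ∈ T) (h3 : Vx_s7.p j ∈ T) : False := by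
  have htri := GG_no_tri T hs.1
  have hno : Vx_s7.p (i + 1) ∉ T := fun h => htri i h1 h h2
  have hR : ∀ v : T, (GG.induce T).Reachable ⟨.p j, h3⟩ v →
      (∃ t, i + 2 ≤ t ∧ t ≤ 2 * k ∧ v.1 = .p t) ∨ (∃ t, i + 1 ≤ t ∧ t < 2 * k ∧ v.1 = .l t) := by
    intro v hv
    rw [SimpleGraph.reachable_iff_reflTransGen] at hv
    induction hv with
    | refl =>
      left
      refine ⟨j, ?_, by omega, rfl⟩
      by_contra hlt
      have : j = i + 1 := by omega
      exact hno (this ▸ h3)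
    | @tail b c _ hbc ih =>
      obtain ⟨b, hb⟩ := b
      obtain ⟨c, hc⟩ := c
      have hbc' : rel b c ∨ rel c b := hbc
      have hcc := hT hc
      cases c <;> cases b <;> simp [rel, core] at hbc' hcc ih ⊢ <;> grind
  have hcount := hs.2 ⟨.p j, h3⟩
  unfold compEdgeCount at hcount
  have hle : {e | e ∈ (GG.induce T).edgeSet ∧ ∀ x ∈ e,
      (GG.induce T).Reachable ⟨.p j, h3⟩ x}.ncard ≤ (Set.Ico (i + 1) (2 * k)).ncard := by
    apply Set.ncard_le_ncard_of_injOn (fun e => lab2 (Sym2.map Subtype.val e)) _ _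
      (Set.finite_Ico _ _)
    · intro e he
      induction e using Sym2.inductionOn with
      | hf a b =>
        have ha := hR a (he.2 a (by simp))
        have hb := hR b (he.2 b (by simp))
        have hab : rel a.1 b.1 ∨ rel b.1 a.1 := he.1
        obtain ⟨a, ha'⟩ := a
        obtain ⟨b, hb'⟩ := b
        cases a <;> cases b <;> simp [rel, lab2, lab] at hab ha hb ⊢ <;> omega
    · intro e he e' he' heq
      induction e using Sym2.inductionOn with
      | hf a b =>
      induction e' using Sym2.inductionOn with
      | hf c d =>
        have hab : rel a.1 b.1 ∨ rel b.1 a.1 := he.1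
        have hcd : rel c.1 d.1 ∨ rel d.1 c.1 := he'.1
        obtain ⟨a, ha⟩ := a
        obtain ⟨b, hb⟩ := b
        obtain ⟨c, hc⟩ := c
        obtain ⟨d, hd⟩ := d
        have ha' := hT ha
        have hb' := hT hb
        have hc' := hT hc
        have hd' := hT hd
        clear he he' hR hcount
        simp only [lab2, Sym2.map_mk, Sym2.lift_mk] at heq
        rw [Sym2.eq_iff]
        simp only [Subtype.mk.injEq]
        cases a <;> cases b <;> simp [rel, core] at hab ha' hb' <;> cases c <;> cases d <;>
          simp [rel, core] at hcd hc' hd' <;> simp [lab] at heq ⊢ <;> grind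
  have : (Set.Ico (i + 1) (2 * k)).ncard = 2 * k - (i + 1) := by
    rw [← Finset.coe_Ico, Set.ncard_coe_finset, Nat.card_Ico]
  omega

theorem H_ge {V : Type*} [Finite V] {G : SimpleGraph V} (f : G ↪g GG) (k : ℕ)
    (hf : Set.range f = core k) : k ≤ fStrong G k := by
  refine le_fStrong f k k (fun i => s(.p (k + i), .l (k + i))) ?_ ?_
  · intro i
    obtain ⟨h1, h2⟩ := pth_strong k (k + i) (by omega) (by omega)
    refine ⟨pth (k + i), by rwa [hf], h2, ?_⟩
    simp [forestEdges, GG, rel, pth]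
  · intro T hT hs i j hi hj
    rw [hf] at hT
    simp [forestEdges] at hi hj
    apply Fin.ext
    rcases lt_trichotomy i.1 j.1 with h | h | h
    · exact (core_conflict k T hT hs (k + i) (k + j) (by omega) (by omega) (by omega)
        hi.2.1 hi.2.2 hj.2.1).elim
    · exact h
    · exact (core_conflict k T hT hs (k + j) (k + i) (by omega) (by omega) (by omega)
        hj.2.1 hj.2.2 hi.2.1).elim

/-- For every integer `k ≥ 1` there exist a finite simple graph `G` and an
induced subgraph `H` of `G` with `f_k(G) = 3` and `f_k(H) ≥ k`. -/
theorem exists_inducedSubgraph_fStrong_ge (k : ℕ) (hk : 1 ≤ k) :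
    ∃ (m : ℕ) (G : SimpleGraph (Fin m)) (S : Set (Fin m)),
      fStrong G k = 3 ∧ k ≤ fStrong (G.induce S) k := by
  have hfin : Finite (full k) := (full_finite k).to_subtype
  obtain ⟨m, ⟨e⟩⟩ := Finite.exists_equiv_fin (full k)
  let ι : Fin m ↪ Vx_s7 := e.symm.toEmbedding.trans (Function.Embedding.subtype _)
  have hι : Set.range ι = full k := by
    ext v
    constructor
    · rintro ⟨x, rfl⟩; exact (e.symm x).2
    · intro hv; exact ⟨e ⟨v, hv⟩, by simp [ι]⟩
  let f : GG.comap ι ↪g GG := SimpleGraph.Embedding.comap ι GG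
  refine ⟨m, GG.comap ι, ι ⁻¹' core k, G_eq_three f k hk hι, ?_⟩
  refine H_ge ((SimpleGraph.Embedding.induce (G := GG.comap ι) (ι ⁻¹' core k)).trans f) k ?_
  ext v
  constructor
  · rintro ⟨x, rfl⟩; exact x.2
  · intro hv
    obtain ⟨x, rfl⟩ : v ∈ Set.range ι := by rw [hι]; exact core_sub k hv
    exact ⟨⟨x, hv⟩, rfl⟩
end InducedArboricity
end

section
/- There exists a class C of finite simple graphs that is nowhere dense but is not f_k-bounded for any k ≥ 1; that is, for every k ≥ 1 and every constant c there is a graph G in C with f_k(G) > c. -/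
open scoped Classical
open scoped Function

namespace InducedArboricity

open SimpleGraph

/-- No cycle of length at most `g`. -/
def LongCycles {V : Type*} (G : SimpleGraph V) (g : ℕ) : Prop :=
  ∀ (u : V) (c : G.Walk u u), c.IsCycle → g < c.length

theorem cycle_of_edge {V : Type*} {G : SimpleGraph V} {x y : V} (h : G.Adj x y)
    (p : G.Walk y x) (hp : s(x, y) ∉ p.edges) :
    ∃ c : G.Walk x x, c.IsCycle ∧ c.length ≤ p.length + 1 := by
  refine ⟨Walk.cons h p.bypass, ?_, ?_⟩
  · rw [Walk.cons_isCycle_iff]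
    exact ⟨p.bypass_isPath, fun h' => hp (p.edges_bypass_subset_edges h')⟩
  · have := p.length_bypass_le_length
    simp only [Walk.length_cons]
    omega

theorem path_of_cycle {V : Type*} {G : SimpleGraph V} {u v w : V} (c : G.Walk w w)
    (hc : c.IsCycle) (h : s(u, v) ∈ c.edges) :
    ∃ p : G.Walk v u, s(u, v) ∉ p.edges ∧ p.length + 1 = c.length := by
  have hu : u ∈ c.support := Walk.fst_mem_support_of_mem_edges c h
  have key : ∀ (d : G.Walk u u), d.IsCycle → d.snd = v →
      ∃ p : G.Walk v u, s(u, v) ∉ p.edges ∧ p.length + 1 = d.length := by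
    intro d hd hs
    cases d with
    | nil => exact absurd hd (by simp)
    | cons h' p =>
      rw [Walk.cons_isCycle_iff] at hd
      simp only [Walk.snd_cons] at hs
      subst hs
      exact ⟨p, hd.2, by simp⟩
  have hd := hc.rotate hu
  have hl : (c.rotate u hu).length = c.length := by simp
  have he : s(u, v) ∈ (c.rotate u hu).edges := by
    exact (c.rotate_edges u hu).mem_iff.mpr h
  rw [← hl]
  generalize c.rotate u hu = d at hd he
  by_cases hs : d.snd = v
  · exact key d hd hs
  · have : d.reverse.snd = v := by
      rw [Walk.snd_reverse]
      cases d with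
      | nil => exact absurd hd (by simp)
      | cons h' p =>
        rw [Walk.cons_isCycle_iff] at hd
        simp only [Walk.snd_cons] at hs
        have he' : s(u, v) ∈ p.edges := by
          simp only [Walk.edges_cons, List.mem_cons] at he
          rcases he with he | he
          · exfalso
            rcases Sym2.eq_iff.mp he with h1 | h1
            · exact hs h1.2.symm
            · exact h'.ne h1.1
          · exact he
        have hn : ¬ p.Nil := fun hn => h'.ne hn.eq.symm
        rw [Walk.penultimate_cons_of_not_nil _ _ hn]
        exact (hd.1.eq_penultimate_of_mem_edges he').symm
    obtain ⟨p, hp⟩ := key d.reverse hd.reverse this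
    exact ⟨p, by simpa using hp⟩

theorem longCycles_sup_edge {V : Type*} {G : SimpleGraph V} {g : ℕ} (hG : LongCycles G g)
    {u v : V} (hfar : ∀ p : G.Walk v u, g < p.length) :
    LongCycles (G ⊔ edge u v) g := by
  intro w c hc
  by_cases he : s(u, v) ∈ c.edges
  · obtain ⟨p, hp, hl⟩ := path_of_cycle c hc he
    have hp' : ∀ e ∈ p.edges, e ∈ G.edgeSet := by
      intro e hep
      have h1 := p.edges_subset_edgeSet hep
      rw [edgeSet_sup] at h1
      rcases h1 with h1 | h1
      · exact h1
      · have : e = s(u, v) := by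
          by_contra hne
          induction e with
          | _ a b =>
            simp only [mem_edgeSet, edge_adj] at h1
            rcases h1.1 with ⟨rfl, rfl⟩ | ⟨rfl, rfl⟩
            · exact hne rfl
            · exact hne Sym2.eq_swap
        exact absurd (this ▸ hep) hp
    have := hfar (p.transfer G hp')
    rw [Walk.length_transfer] at this
    omega
  · have hp' : ∀ e ∈ c.edges, e ∈ G.edgeSet := by
      intro e hep
      have h1 := c.edges_subset_edgeSet hep
      rw [edgeSet_sup] at h1
      rcases h1 with h1 | h1
      · exact h1
      · have : e = s(u, v) := by
          by_contra hne
          induction e with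
          | _ a b =>
            simp only [mem_edgeSet, edge_adj] at h1
            rcases h1.1 with ⟨rfl, rfl⟩ | ⟨rfl, rfl⟩
            · exact hne rfl
            · exact hne Sym2.eq_swap
        exact absurd (this ▸ hep) he
    have := hG w (c.transfer G hp') (hc.transfer hp')
    rwa [Walk.length_transfer] at this

theorem ball_card {V : Type*} [Fintype V] (G : SimpleGraph V) (D : ℕ)
    (hD : ∀ v, (G.neighborSet v).ncard ≤ D) (r : ℕ) :
    ∀ u : V, {v | ∃ p : G.Walk u v, p.length ≤ r}.ncard ≤ (D + 1) ^ r := by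
  induction r with
  | zero =>
    intro u
    have : {v | ∃ p : G.Walk u v, p.length ≤ 0} ⊆ {u} := by
      rintro v ⟨p, hp⟩
      exact (Walk.eq_of_length_eq_zero (Nat.le_zero.mp hp)).symm
    simpa using Set.ncard_le_ncard this
  | succ r ih =>
    intro u
    let N : Finset V := (insert u (G.neighborSet u)).toFinset
    have hN : N.card ≤ D + 1 := by
      rw [← Set.ncard_eq_toFinset_card']
      exact (Set.ncard_insert_le _ _).trans (by have := hD u; omega)
    have hsub : {v | ∃ p : G.Walk u v, p.length ≤ r + 1} ⊆
        ((N.biUnion fun x => {v | ∃ p : G.Walk x v, p.length ≤ r}.toFinset : Finset V) : Set V) := by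
      rintro v ⟨p, hp⟩
      simp only [Finset.coe_biUnion, Set.mem_iUnion, Set.coe_toFinset, Set.mem_ofPred_eq, N,
        Set.mem_insert_iff, mem_neighborSet, Set.mem_toFinset, Finset.mem_coe]
      cases p with
      | nil => exact ⟨u, Or.inl rfl, Walk.nil, by simp⟩
      | @cons _ x _ h q => exact ⟨x, Or.inr h, q, by simpa using hp⟩
    refine (Set.ncard_le_ncard hsub).trans ?_
    rw [Set.ncard_coe_finset]
    refine (Finset.card_biUnion_le_card_mul N _ ((D + 1) ^ r) ?_).trans ?_
    · intro x _
      rw [← Set.ncard_eq_toFinset_card']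
      exact ih x
    · rw [pow_succ, mul_comm]
      exact Nat.mul_le_mul_left _ hN

theorem acyclic_edges_le {W : Type*} [Fintype W] (H : SimpleGraph W) (h : H.IsAcyclic) :
    H.edgeSet.ncard ≤ Fintype.card W := by
  rcases isEmpty_or_nonempty W with hW | hW
  · have : H.edgeSet = ∅ := by
      ext e
      induction e with
      | _ a b => exact hW.elim a
    simp [this]
  · obtain ⟨T, hT2, _, hT3⟩ := Connected.exists_isTree_le_of_le_of_isAcyclic
      (connected_top (V := W)) (le_top : H ≤ ⊤) h
    have h1 : H.edgeSet ⊆ T.edgeSet := edgeSet_mono hT2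
    have h2 := hT3.card_edgeFinset
    rw [edgeFinset, ← Set.ncard_eq_toFinset_card'] at h2
    have := Set.ncard_le_ncard h1
    omega

theorem exists_graph (g c : ℕ) (hg : 1 ≤ g) : ∃ (n : ℕ) (G : SimpleGraph (Fin n)),
    G.Connected ∧ LongCycles G g ∧ g < n ∧ c * n < G.edgeSet.ncard := by
  let D := 4 * (c + 1)
  let n0 := 2 * (D + 1) ^ g + g
  let P : SimpleGraph (Fin (n0 + 1)) → Prop := fun G =>
    G.Connected ∧ LongCycles G g ∧ ∀ v, (G.neighborSet v).ncard ≤ D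
  have hP : ∃ G, P G := by
    obtain ⟨T, hT, hT2⟩ := (pathGraph_connected n0).exists_isTree_le
    refine ⟨T, hT2.1, fun u c hc => absurd hc (hT2.2 c), fun v => ?_⟩
    have : T.neighborSet v ⊆
        ((Finset.univ.filter fun w : Fin (n0 + 1) => w.val = v.val + 1) ∪
          (Finset.univ.filter fun w : Fin (n0 + 1) => w.val + 1 = v.val) : Finset _) := by
      intro w hw
      have := hT hw
      rw [pathGraph_adj] at this
      simp
      omega
    refine (Set.ncard_le_ncard this).trans ?_
    rw [Set.ncard_coe_finset]
    refine (Finset.card_union_le _ _).trans ?_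
    have h1 : (Finset.univ.filter fun w : Fin (n0 + 1) => w.val = v.val + 1).card ≤ 1 := by
      rw [Finset.card_le_one]
      intro a ha b hb
      simp at ha hb
      ext; omega
    have h2 : (Finset.univ.filter fun w : Fin (n0 + 1) => w.val + 1 = v.val).card ≤ 1 := by
      rw [Finset.card_le_one]
      intro a ha b hb
      simp at ha hb
      ext; omega
    omega
  obtain ⟨G, hG⟩ := Set.Finite.exists_maximal (Set.toFinite {G | P G}) hP
  obtain ⟨hconn, hlong, hdeg⟩ : P G := hG.1
  refine ⟨n0 + 1, G, hconn, hlong, by omega, ?_⟩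
  let S : Finset (Fin (n0 + 1)) := Finset.univ.filter fun v => G.degree v < D
  have hdn : ∀ v, G.degree v = (G.neighborSet v).ncard := by
    intro v
    rw [Set.ncard_eq_toFinset_card', degree, neighborFinset]
  have hS : S.card ≤ (D + 1) ^ g := by
    rcases S.eq_empty_or_nonempty with h | ⟨u, hu⟩
    · simp [h]
    · refine le_trans ?_ (ball_card G D hdeg g u)
      rw [← Set.ncard_coe_finset]
      refine Set.ncard_le_ncard ?_
      intro v hv
      by_contra hfar
      simp only [Set.mem_ofPred_eq, not_exists, not_le] at hfar
      have huv : u ≠ v := by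
        rintro rfl
        have := hfar Walk.nil
        simp at this
      have hnadj : ¬ G.Adj u v := by
        intro h
        have := hfar h.toWalk
        simp at this
        omega
      have hlong' : LongCycles (G ⊔ edge u v) g := by
        apply longCycles_sup_edge hlong
        intro p
        simpa using hfar p.reverse
      have hle : G ≤ G ⊔ edge u v := le_sup_left
      have hu' : G.degree u < D := by simpa [S] using hu
      have hv' : G.degree v < D := by simpa [S] using hv
      rw [hdn] at hu' hv'
      have hP' : P (G ⊔ edge u v) := by
        refine ⟨hconn.mono hle, hlong', fun w => ?_⟩
        by_cases hwu : w = u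
        · subst hwu
          have : (G ⊔ edge w v).neighborSet w ⊆ insert v (G.neighborSet w) := by
            intro z hz
            simp only [mem_neighborSet, sup_adj, edge_adj] at hz
            simp only [Set.mem_insert_iff, mem_neighborSet]
            grind
          have h1 := Set.ncard_le_ncard this
          have h2 := Set.ncard_insert_le v (G.neighborSet w)
          omega
        · by_cases hwv : w = v
          · subst hwv
            have : (G ⊔ edge u w).neighborSet w ⊆ insert u (G.neighborSet w) := by
              intro z hz
              simp only [mem_neighborSet, sup_adj, edge_adj] at hz
              simp only [Set.mem_insert_iff, mem_neighborSet]
              grind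
            have h1 := Set.ncard_le_ncard this
            have h2 := Set.ncard_insert_le u (G.neighborSet w)
            omega
          · have : (G ⊔ edge u v).neighborSet w ⊆ G.neighborSet w := by
              intro z hz
              simp only [mem_neighborSet, sup_adj, edge_adj] at hz
              simp only [mem_neighborSet]
              grind
            exact (Set.ncard_le_ncard this).trans (hdeg w)
      apply hnadj
      apply hG.2 hP' hle
      exact Or.inr (by simp [edge_adj, huv])
  have hsum := G.sum_degrees_eq_twice_card_edges
  have hE : G.edgeFinset.card = G.edgeSet.ncard := by
    rw [edgeFinset, ← Set.ncard_eq_toFinset_card']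
  rw [hE] at hsum
  have hlow : ∑ v ∈ Finset.univ \ S, D ≤ ∑ v, G.degree v := by
    refine le_trans (Finset.sum_le_sum (g := fun v => G.degree v) ?_)
      (Finset.sum_le_sum_of_subset (Finset.subset_univ _))
    intro v hv
    simpa [S] using hv
  rw [Finset.sum_const, smul_eq_mul, hsum] at hlow
  have hcard : (Finset.univ \ S).card + S.card = n0 + 1 := by
    rw [Finset.card_sdiff_add_card_eq_card (Finset.subset_univ _)]
    simp
  have h3 : n0 + 1 ≤ 2 * (Finset.univ \ S).card := by omega
  have h4 : 2 * ((c + 1) * (n0 + 1)) ≤ (Finset.univ \ S).card * D := by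
    simp only [D]
    nlinarith
  nlinarith

theorem exists_connected_set {V : Type*} [Fintype V] (G : SimpleGraph V) (hG : G.Connected)
    {u v : V} (huv : G.Adj u v) (k : ℕ) (hk : 1 ≤ k) (hn : k + 1 ≤ Fintype.card V) :
    ∃ S : Set V, u ∈ S ∧ v ∈ S ∧ (G.induce S).Connected ∧ S.ncard = k + 1 := by
  induction k, hk using Nat.le_induction with
  | base =>
    exact ⟨{u, v}, by simp, by simp, induce_pair_connected_of_adj huv, Set.ncard_pair huv.ne⟩
  | succ k hk ih =>
    obtain ⟨S, hu, hv, hc, hS⟩ := ih (by omega)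
    have : ∃ w, w ∉ S := by
      by_contra hall
      push Not at hall
      have : S = Set.univ := Set.eq_univ_of_forall hall
      rw [this, Set.ncard_univ, Nat.card_eq_fintype_card] at hS
      omega
    obtain ⟨w, hw⟩ := this
    obtain ⟨p⟩ := hG.preconnected u w
    obtain ⟨d, _, hd1, hd2⟩ := p.exists_boundary_dart S hu hw
    refine ⟨S ∪ {d.snd}, Or.inl hu, Or.inl hv, ?_, ?_⟩
    · have h1 : (G.induce ({d.snd} : Set V)).Connected := by
        have : Subsingleton ({d.snd} : Set V) := inferInstance
        exact { preconnected := Preconnected.of_subsingleton, nonempty := ⟨⟨d.snd, rfl⟩⟩ }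
      exact connected_induce_union hc.preconnected h1.preconnected hd1 rfl d.adj
    · rw [Set.union_singleton, Set.ncard_insert_of_notMem hd2, hS]

theorem all_valid {V : Type*} [Fintype V] (G : SimpleGraph V) (hG : G.Connected) (k : ℕ)
    (hk : 1 ≤ k) (hn : k + 1 ≤ Fintype.card V) (hl : LongCycles G (k + 1)) (e : Sym2 V)
    (he : e ∈ G.edgeSet) : KValid G k e := by
  induction e with
  | _ u v =>
  obtain ⟨S, hu, hv, hc, hS⟩ := exists_connected_set G hG he k hk hn
  have hac : (G.induce S).IsAcyclic := by
    intro x c hcc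
    have h1 := hl _ (c.map (Embedding.induce S).toHom)
      (hcc.map (Embedding.induce (G := G) S).injective)
    rw [Walk.length_map] at h1
    have h2 := hcc.isPath_tail.length_lt
    have h3 := Walk.length_tail_add_one hcc.not_nil
    rw [← Nat.card_eq_fintype_card, Nat.card_coe_set_eq, hS] at h2
    omega
  refine ⟨S, ⟨hac, fun x => ?_⟩, he, ?_⟩
  · have ht : (G.induce S).IsTree := ⟨hc, hac⟩
    have h2 := ht.card_edgeFinset
    rw [edgeFinset, ← Set.ncard_eq_toFinset_card', ← Nat.card_eq_fintype_card,
      Nat.card_coe_set_eq, hS] at h2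
    have : {e | e ∈ (G.induce S).edgeSet ∧ ∀ y ∈ e, (G.induce S).Reachable x y}
        = (G.induce S).edgeSet := by
      ext e
      simp only [Set.mem_ofPred_eq, and_iff_left_iff_imp]
      exact fun _ y _ => hc.preconnected x y
    rw [compEdgeCount, this]
    omega
  · intro x hx
    rcases Sym2.mem_iff.mp hx with rfl | rfl <;> assumption

theorem forestEdges_le {V : Type*} [Fintype V] (G : SimpleGraph V) (S : Set V)
    (h : (G.induce S).IsAcyclic) : (forestEdges G S).ncard ≤ Fintype.card V := by
  have h1 := acyclic_edges_le _ h
  have h2 : Fintype.card S ≤ Fintype.card V := Fintype.card_subtype_le _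
  refine le_trans ?_ (h1.trans h2)
  have : forestEdges G S ⊆ (Sym2.map Subtype.val) '' (G.induce S).edgeSet := by
    rintro e ⟨he, hx⟩
    induction e with
    | _ u v =>
    exact ⟨s(⟨u, hx u (by simp)⟩, ⟨v, hx v (by simp)⟩), he, rfl⟩
  exact (Set.ncard_le_ncard this).trans (Set.ncard_image_le (Set.toFinite _))

theorem fStrong_gt {n : ℕ} (G : SimpleGraph (Fin n)) (k c : ℕ)
    (hv : ∀ e ∈ G.edgeSet, KValid G k e) (hm : c * n < G.edgeSet.ncard) : c < fStrong G k := by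
  have hne : {N | ∃ F : Fin N → Set (Fin n), (∀ i, IsStrongForest G k (F i)) ∧
      ∀ e, KValid G k e → ∃ i, e ∈ forestEdges G (F i)}.Nonempty := by
    choose f hf using fun e : {e // KValid G k e} => e.2
    let φ := Fintype.equivFin {e // KValid G k e}
    refine ⟨_, fun i => f (φ.symm i), fun i => (hf (φ.symm i)).1, fun e he => ?_⟩
    refine ⟨φ ⟨e, he⟩, ?_⟩
    have := (hf ⟨e, he⟩).2
    simpa using this
  obtain ⟨F, hF, hcov⟩ := Nat.sInf_mem hne
  change Fin (fStrong G k) → _ at F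
  have hsub : G.edgeSet ⊆ ((Finset.univ.biUnion fun i : Fin (fStrong G k) =>
      (forestEdges G (F i)).toFinset : Finset _) : Set (Sym2 (Fin n))) := by
    intro e he
    obtain ⟨i, hi⟩ := hcov e (hv e he)
    simp only [Finset.coe_biUnion, Set.mem_iUnion, Set.coe_toFinset]
    exact ⟨i, Finset.mem_coe.mpr (Finset.mem_univ i), hi⟩
  have h1 := Set.ncard_le_ncard hsub
  rw [Set.ncard_coe_finset] at h1
  have h2 := Finset.card_biUnion_le_card_mul (Finset.univ : Finset (Fin (fStrong G k)))
    (fun i => (forestEdges G (F i)).toFinset) n (by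
      intro i _
      rw [← Set.ncard_eq_toFinset_card']
      simpa using forestEdges_le G (F i) (hF i).1)
  rw [Finset.card_univ, Fintype.card_fin] at h2
  exact lt_of_mul_lt_mul_right (hm.trans_le (h1.trans h2)) (Nat.zero_le n)

theorem branch_walk {W : Type*} (H : SimpleGraph W) (B : Set W) (d : ℕ)
    (hB : ∃ c : B, ∀ y : B, (H.induce B).Reachable c y ∧ (H.induce B).dist c y ≤ d)
    {x y : W} (hx : x ∈ B) (hy : y ∈ B) :
    ∃ p : H.Walk x y, p.length ≤ 2 * d ∧ ∀ e ∈ p.edges, ∀ z ∈ e, z ∈ B := by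
  obtain ⟨c, hc⟩ := hB
  obtain ⟨p, hp⟩ := (hc ⟨x, hx⟩).1.exists_walk_length_eq_dist
  obtain ⟨q, hq⟩ := (hc ⟨y, hy⟩).1.exists_walk_length_eq_dist
  have h1 := (hc ⟨x, hx⟩).2
  have h2 := (hc ⟨y, hy⟩).2
  suffices ∃ r : H.Walk ((Embedding.induce (G := H) B).toHom ⟨x, hx⟩)
      ((Embedding.induce (G := H) B).toHom ⟨y, hy⟩),
      r.length ≤ 2 * d ∧ ∀ e ∈ r.edges, ∀ z ∈ e, z ∈ B from this
  refine ⟨(p.reverse.append q).map (Embedding.induce B).toHom, ?_, ?_⟩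
  · rw [Walk.length_map, Walk.length_append, Walk.length_reverse]
    omega
  · intro e he z hz
    rw [Walk.edges_map, List.mem_map] at he
    obtain ⟨e', _, rfl⟩ := he
    obtain ⟨a, _, rfl⟩ := Sym2.mem_map.mp hz
    exact a.2

theorem no_triangle_s10 {m : ℕ} {W : Type*} (H : SimpleGraph W) (d : ℕ) (hm : 3 ≤ m)
    (h : IsShallowMinor d (⊤ : SimpleGraph (Fin m)) H) (hl : LongCycles H (6 * d + 3)) : False := by
  obtain ⟨B, hdis, hrad, hadj⟩ := h
  let i0 : Fin m := ⟨0, by omega⟩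
  let i1 : Fin m := ⟨1, by omega⟩
  let i2 : Fin m := ⟨2, by omega⟩
  have h01 : i0 ≠ i1 := by simp [i0, i1]
  have h02 : i0 ≠ i2 := by simp [i0, i2]
  have h12 : i1 ≠ i2 := by simp [i1, i2]
  have hd : ∀ {i j : Fin m}, i ≠ j → ∀ {z}, z ∈ B i → z ∈ B j → False :=
    fun hij _ hi hj => Set.disjoint_left.mp (hdis hij) hi hj
  obtain ⟨x, hx, y, hy, hxy⟩ := hadj i0 i1 h01
  obtain ⟨y', hy', z, hz, hyz⟩ := hadj i1 i2 h12
  obtain ⟨x', hx', z', hz', hxz⟩ := hadj i0 i2 h02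
  obtain ⟨p, hp, hp'⟩ := branch_walk H _ d (hrad i1) hy hy'
  obtain ⟨q, hq, hq'⟩ := branch_walk H _ d (hrad i2) hz hz'
  obtain ⟨r, hr, hr'⟩ := branch_walk H _ d (hrad i0) hx' hx
  obtain ⟨c, hc, hcl⟩ := cycle_of_edge hxy
    (p.append (Walk.cons hyz (q.append (Walk.cons hxz.symm r)))) (by
      simp only [Walk.edges_append, Walk.edges_cons, List.mem_append, List.mem_cons, not_or]
      refine ⟨fun h => ?_, fun h => ?_, fun h => ?_, fun h => ?_, fun h => ?_⟩
      · exact hd h01 hx (hp' _ h x (by simp))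
      · rcases Sym2.eq_iff.mp h with ⟨h, _⟩ | ⟨h, _⟩
        · exact hd h01 hx (h ▸ hy')
        · exact hd h02 hx (h ▸ hz)
      · exact hd h02 hx (hq' _ h x (by simp))
      · rcases Sym2.eq_iff.mp h with ⟨h, _⟩ | ⟨_, h⟩
        · exact hd h02 hx (h ▸ hz')
        · exact hd h12 hy (h ▸ hz')
      · exact hd h01 (hr' _ h y (by simp)) hy)
  have := hl _ c hc
  simp at hcl
  omega

theorem minor_card {m n : ℕ} (H : SimpleGraph (Fin n)) (d : ℕ)
    (h : IsShallowMinor d (⊤ : SimpleGraph (Fin m)) H) : m ≤ n := by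
  obtain ⟨B, hdis, hrad, _⟩ := h
  choose c _ using hrad
  have : Function.Injective (fun i => (c i : Fin n)) := by
    intro i j hij
    by_contra hne
    refine Set.disjoint_left.mp (hdis hne) (c i).2 ?_
    have : (c i : Fin n) = c j := hij
    rw [this]
    exact (c j).2
  simpa using Fintype.card_le_of_injective _ this

/-- There is a class of finite simple graphs that is nowhere dense but is
not `f_k`-bounded for any `k ≥ 1`: for every `k ≥ 1` and every constant `c` some graph `G`
in the class has `f_k(G) > c`. -/
theorem exists_nowhereDense_not_fStrong_bounded :
    ∃ C : GraphClass, NowhereDense C ∧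
      ∀ k : ℕ, 1 ≤ k → ∀ c : ℕ, ∃ (n : ℕ), ∃ G ∈ C n, c < fStrong G k := by
  have hex := fun i : ℕ => exists_graph (i + 1) i (by omega)
  choose N G hconn hlong hn hm using hex
  refine ⟨fun n => {H | ∃ i, ∃ h : N i = n, h ▸ G i = H}, ?_, ?_⟩
  · intro d
    refine ⟨3 + ∑ i ∈ Finset.range (6 * d + 3), N i, ⊤, ?_⟩
    rintro ⟨n, H, ⟨i, rfl, rfl⟩, hmin⟩
    simp only at hmin
    by_cases hi : i < 6 * d + 3
    · have h1 := minor_card _ d hmin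
      have h2 : N i ≤ ∑ i ∈ Finset.range (6 * d + 3), N i :=
        Finset.single_le_sum (fun _ _ => Nat.zero_le _) (Finset.mem_range.mpr hi)
      omega
    · refine no_triangle_s10 _ d (by omega) hmin fun u c hc => ?_
      have := hlong i u c hc
      omega
  · intro k hk c
    let i := max k c
    refine ⟨N i, G i, ⟨i, rfl, rfl⟩, fStrong_gt _ _ _ ?_ ?_⟩
    · intro e he
      have h1 := hn i
      have h2 : k ≤ i := le_max_left _ _
      refine all_valid _ (hconn i) k hk (by rw [Fintype.card_fin]; omega) ?_ e he
      intro u w hw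
      have := hlong i u w hw
      omega
    · exact lt_of_le_of_lt (Nat.mul_le_mul_right _ (le_max_right k c)) (hm i)
end InducedArboricity
end

section
/- For every finite simple graph G of tree-width t ≥ 2, the induced arboricity satisfies f_1(G) ≤ C(t+1, 2), where C(t+1,2) is the binomial coefficient (t+1 choose 2). -/
open scoped Classical
open scoped Function

namespace InducedArboricity

theorem walk_in_set {ι : Type} (T : SimpleGraph ι) (A : Set ι) (hA : (T.induce A).Connected)
    {i j : ι} (hi : i ∈ A) (hj : j ∈ A) :
    ∃ p : T.Walk i j, p.IsPath ∧ ∀ x ∈ p.support, x ∈ A := by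
  obtain ⟨p, hp⟩ := hA.exists_isPath ⟨i, hi⟩ ⟨j, hj⟩
  refine ⟨p.map (SimpleGraph.Embedding.induce A).toHom, ?_, ?_⟩
  · exact hp.map Subtype.val_injective
  · intro x hx
    have hs := SimpleGraph.Walk.support_map (SimpleGraph.Embedding.induce A).toHom p
    obtain ⟨y, _, rfl⟩ := List.mem_map.1 ((congrArg (fun l => x ∈ l) hs).mp hx)
    exact y.2

theorem dist_of_mem_geodesic {ι : Type} (T : SimpleGraph ι) {a r x : ι} (p : T.Walk a r)
    (hp : p.length = T.dist a r) (hx : x ∈ p.support) : x = a ∨ T.dist x r < T.dist a r := by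
  have h1 := SimpleGraph.dist_le (p.dropUntil x hx)
  have h2 : (p.takeUntil x hx).length + (p.dropUntil x hx).length = p.length := by
    rw [← SimpleGraph.Walk.length_append, SimpleGraph.Walk.take_spec]
  by_cases h0 : (p.takeUntil x hx).length = 0
  · exact Or.inl (SimpleGraph.Walk.eq_of_length_eq_zero h0).symm
  · right; omega

theorem top_mem {ι : Type} (T : SimpleGraph ι) (hT : T.IsTree) (r : ι) (A C : Set ι)
    (hA : (T.induce A).Connected) (hC : (T.induce C).Connected) {i a c : ι}
    (hiA : i ∈ A) (hiC : i ∈ C) (ha : a ∈ A) (hc : c ∈ C)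
    (hamin : ∀ x ∈ A, T.dist a r ≤ T.dist x r)
    (hca : T.dist c r ≤ T.dist a r) : a ∈ C := by
  obtain ⟨p1, hp1, hp1A⟩ := walk_in_set T A hA hiA ha
  obtain ⟨p2, hp2⟩ := hT.connected.exists_walk_length_eq_dist a r
  obtain ⟨q1, hq1, hq1C⟩ := walk_in_set T C hC hiC hc
  obtain ⟨q2, hq2⟩ := hT.connected.exists_walk_length_eq_dist c r
  have hp2p := p2.isPath_of_length_eq_dist hp2
  have hP : (p1.append p2).IsPath := by
    rw [SimpleGraph.Walk.isPath_def, SimpleGraph.Walk.support_append, List.nodup_append']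
    have hn := hp2p.support_nodup
    rw [SimpleGraph.Walk.support_eq_cons] at hn
    refine ⟨hp1.support_nodup, (List.nodup_cons.1 hn).2, ?_⟩
    intro x hx hx'
    have hxs : x ∈ p2.support := List.mem_of_mem_tail hx'
    rcases dist_of_mem_geodesic T p2 hp2 hxs with h | h
    · subst h
      exact (List.nodup_cons.1 hn).1 hx'
    · exact absurd (hamin x (hp1A x hx)) (not_le.2 h)
  have hE : (q1.append q2).bypass = p1.append p2 := by
    have := hT.isAcyclic.path_unique ⟨_, (q1.append q2).bypass_isPath⟩ ⟨_, hP⟩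
    exact congrArg Subtype.val this
  have haP : a ∈ (q1.append q2).support := by
    apply SimpleGraph.Walk.support_bypass_subset
    rw [hE, SimpleGraph.Walk.mem_support_append_iff]
    exact Or.inl p1.end_mem_support
  rw [SimpleGraph.Walk.mem_support_append_iff] at haP
  rcases haP with h | h
  · exact hq1C a h
  · rcases dist_of_mem_geodesic T q2 hq2 h with h | h
    · exact h ▸ hc
    · omega

/-- Any nonempty finite vertex set has a vertex which is simplicial in the chordal completion. -/
theorem exists_simplicial {V ι : Type} (T : SimpleGraph ι) (B : ι → Finset V) (hT : T.IsTree)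
    (hB : ∀ v : V, (T.induce {i | v ∈ B i}).Connected) (W : Finset V) (hW : W.Nonempty) :
    ∃ v ∈ W, ∃ i, v ∈ B i ∧ ∀ u ∈ W, (∃ j, u ∈ B j ∧ v ∈ B j) → u ∈ B i := by
  obtain ⟨r⟩ := hT.connected.nonempty
  have htop : ∀ v : V, ∃ a, v ∈ B a ∧ ∀ x, v ∈ B x → T.dist a r ≤ T.dist x r := by
    intro v
    obtain ⟨⟨i, hi⟩⟩ := (hB v).nonempty
    obtain ⟨a, ha, hmin⟩ := (wellFounded_lt (α := ℕ)).onFun (f := fun i => T.dist i r)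
      |>.has_min {i | v ∈ B i} ⟨i, hi⟩
    exact ⟨a, ha, fun x hx => not_lt.1 (hmin x hx)⟩
  choose top htop1 htop2 using htop
  obtain ⟨v, hv, hmax⟩ := W.exists_max_image (fun v => T.dist (top v) r) hW
  refine ⟨v, hv, top v, htop1 v, ?_⟩
  rintro u hu ⟨j, huj, hvj⟩
  exact top_mem T hT r {i | v ∈ B i} {i | u ∈ B i} (hB v) (hB u) (i := j) hvj huj
    (htop1 v) (htop1 u) (htop2 v) (hmax u hu)

theorem exists_coloring {V ι : Type} (B : ι → Finset V) (t : ℕ)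
    (hcard : ∀ i, (B i).card ≤ t + 1)
    (hS : ∀ W : Finset V, W.Nonempty →
      ∃ v ∈ W, ∃ i, v ∈ B i ∧ ∀ u ∈ W, (∃ j, u ∈ B j ∧ v ∈ B j) → u ∈ B i) (n : ℕ) :
    ∀ W : Finset V, W.card = n → ∃ c : V → Fin (t + 1),
      ∀ u ∈ W, ∀ v ∈ W, u ≠ v → (∃ j, u ∈ B j ∧ v ∈ B j) → c u ≠ c v := by
  induction n with
  | zero =>
    intro W hW
    rw [Finset.card_eq_zero] at hW
    subst hW
    exact ⟨fun _ => 0, by simp⟩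
  | succ n ih =>
    intro W hW
    obtain ⟨v, hv, i, hvi, hi⟩ := hS W (Finset.card_pos.1 (by omega))
    obtain ⟨c, hc⟩ := ih (W.erase v) (by rw [Finset.card_erase_of_mem hv]; omega)
    have hlt : (((B i).erase v).image c).card < (Finset.univ : Finset (Fin (t + 1))).card := by
      refine lt_of_le_of_lt Finset.card_image_le ?_
      rw [Finset.card_erase_of_mem hvi, Finset.card_univ, Fintype.card_fin]
      have := hcard i
      omega
    obtain ⟨k, _, hk⟩ := Finset.exists_mem_notMem_of_card_lt_card hlt
    have key : ∀ u ∈ W, u ≠ v → (∃ j, u ∈ B j ∧ v ∈ B j) → c u ≠ k := by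
      intro u hu huv hj h
      exact hk (Finset.mem_image.2 ⟨u, Finset.mem_erase.2 ⟨huv, hi u hu hj⟩, h⟩)
    refine ⟨Function.update c v k, ?_⟩
    intro u hu w hw huw hj
    by_cases h1 : u = v
    · subst h1
      rw [Function.update_self, Function.update_of_ne huw.symm]
      obtain ⟨j, a, b⟩ := hj
      exact (key w hw huw.symm ⟨j, b, a⟩).symm
    · by_cases h2 : w = v
      · subst h2
        rw [Function.update_self, Function.update_of_ne h1]
        exact key u hu huw hj
      · rw [Function.update_of_ne h1, Function.update_of_ne h2]
        exact hc u (Finset.mem_erase.2 ⟨h1, hu⟩) w (Finset.mem_erase.2 ⟨h2, hw⟩) huw hj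

theorem two_colors_acyclic {V ι : Type} (G : SimpleGraph V) (B : ι → Finset V) {m : ℕ}
    (hE : ∀ u v, G.Adj u v → ∃ j, u ∈ B j ∧ v ∈ B j)
    (hS : ∀ W : Finset V, W.Nonempty →
      ∃ v ∈ W, ∃ i, v ∈ B i ∧ ∀ u ∈ W, (∃ j, u ∈ B j ∧ v ∈ B j) → u ∈ B i)
    (c : V → Fin m) (hc : ∀ u v, u ≠ v → (∃ j, u ∈ B j ∧ v ∈ B j) → c u ≠ c v)
    (P : Finset (Fin m)) (hP : P.card = 2) (S : Set V) (hSP : ∀ v ∈ S, c v ∈ P) :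
    (G.induce S).IsAcyclic := by
  intro s p hp
  obtain ⟨v, hv, i, hvi, hi⟩ := hS (p.support.toFinset.image Subtype.val)
    ⟨s.1, Finset.mem_image_of_mem _ (by simp)⟩
  obtain ⟨x, hx, rfl⟩ := Finset.mem_image.1 hv
  rw [List.mem_toFinset] at hx
  have hq := hp.rotate hx
  have hsup : ∀ y ∈ (p.rotate x hx).support, y ∈ p.support := by
    intro y hy
    simpa using hy
  have h1 := (p.rotate x hx).adj_snd hq.not_nil
  have h2 := (p.rotate x hx).adj_penultimate hq.not_nil
  have h3 := hq.snd_ne_penultimate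
  have hu := hsup _ ((p.rotate x hx).getVert_mem_support 1)
  have hw := hsup _ ((p.rotate x hx).getVert_mem_support ((p.rotate x hx).length - 1))
  change (p.rotate x hx).snd ∈ p.support at hu
  change (p.rotate x hx).penultimate ∈ p.support at hw
  generalize (p.rotate x hx).snd = u at *
  generalize (p.rotate x hx).penultimate = w at *
  have h1' : G.Adj x.1 u.1 := h1
  have h2' : G.Adj w.1 x.1 := h2
  have h3' : u.1 ≠ w.1 := fun h => h3 (Subtype.ext h)
  have hui := hi u.1 (Finset.mem_image_of_mem _ (List.mem_toFinset.2 hu)) (hE _ _ h1'.symm)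
  have hwi := hi w.1 (Finset.mem_image_of_mem _ (List.mem_toFinset.2 hw)) (hE _ _ h2')
  have c1 := hc _ _ h1'.ne ⟨i, hvi, hui⟩
  have c2 := hc _ _ h2'.ne ⟨i, hwi, hvi⟩
  have c3 := hc _ _ h3' ⟨i, hui, hwi⟩
  have hsub : ({c x.1, c u.1, c w.1} : Finset (Fin m)) ⊆ P := by
    intro k hk
    simp only [Finset.mem_insert, Finset.mem_singleton] at hk
    rcases hk with rfl | rfl | rfl
    · exact hSP _ x.2
    · exact hSP _ u.2
    · exact hSP _ w.2
  have := Finset.card_le_card hsub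
  rw [Finset.card_eq_three.2 ⟨_, _, _, c1, c2.symm, c3, rfl⟩] at this
  omega

/-- Every finite simple graph `G` of tree-width `t ≥ 2` has induced
arboricity `f₁(G) ≤ (t+1 choose 2)`. -/
theorem fStrong_one_le_of_treewidth {V : Type} [Fintype V] (G : SimpleGraph V) (t : ℕ)
    (ht : 2 ≤ t) (htw : treewidth G = t) :
    fStrong G 1 ≤ (t + 1).choose 2 := by
  have hne : {t | HasTreewidthAtMost G t}.Nonempty := by
    by_contra h
    rw [Set.not_nonempty_iff_eq_empty] at h
    rw [treewidth, h, Nat.sInf_empty] at htw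
    omega
  have hmem := Nat.sInf_mem hne
  change HasTreewidthAtMost G (treewidth G) at hmem
  rw [htw] at hmem
  obtain ⟨ι, T, B, hT, hedge, hB, hcard⟩ := hmem
  have hE : ∀ u v, G.Adj u v → ∃ j, u ∈ B j ∧ v ∈ B j := by
    intro u v huv
    obtain ⟨i, hi⟩ := hedge s(u, v) huv
    exact ⟨i, hi u (by simp), hi v (by simp)⟩
  have hS := exists_simplicial T B hT hB
  obtain ⟨c, hc0⟩ := exists_coloring B t hcard hS _ Finset.univ rfl
  have hc : ∀ u v, u ≠ v → (∃ j, u ∈ B j ∧ v ∈ B j) → c u ≠ c v :=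
    fun u v => hc0 u (Finset.mem_univ _) v (Finset.mem_univ _)
  have hcount : (Finset.powersetCard 2 (Finset.univ : Finset (Fin (t + 1)))).card
      = (t + 1).choose 2 := by simp
  let e := (Finset.equivFinOfCardEq hcount).symm
  apply Nat.sInf_le
  refine ⟨fun k => {v | c v ∈ (e k).1 ∧ ∃ u, G.Adj v u ∧ c u ∈ (e k).1}, ?_, ?_⟩
  · intro k
    refine ⟨two_colors_acyclic G B hE hS c hc (e k).1
      (Finset.mem_powersetCard.1 (e k).2).2 _ (fun v hv => hv.1), ?_⟩
    rintro ⟨v, hv, u, huv, hu⟩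
    rw [compEdgeCount, Nat.one_le_iff_ne_zero, Ne, Set.ncard_eq_zero (Set.toFinite _)]
    apply Set.Nonempty.ne_empty
    refine ⟨s(⟨v, hv, u, huv, hu⟩, ⟨u, hu, v, huv.symm, hv⟩), ?_, ?_⟩
    · exact huv
    · intro x hx
      rcases Sym2.mem_iff.1 hx with rfl | rfl
      · exact SimpleGraph.Reachable.refl _
      · exact SimpleGraph.Adj.reachable (by exact huv)
  · rintro ⟨u, v⟩ ⟨S, _, he, _⟩
    have huv : G.Adj u v := he
    have hcuv := hc u v huv.ne (hE u v huv)
    let P : Finset.powersetCard 2 (Finset.univ : Finset (Fin (t + 1))) :=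
      ⟨{c u, c v}, Finset.mem_powersetCard.2 ⟨Finset.subset_univ _, Finset.card_pair hcuv⟩⟩
    refine ⟨e.symm P, he, ?_⟩
    have hP : (e (e.symm P)).1 = {c u, c v} := by rw [Equiv.apply_symm_apply]
    intro x hx
    rw [Set.mem_setOf_eq, hP]
    rcases Sym2.mem_iff.1 hx with rfl | rfl
    · exact ⟨by simp, v, huv, by simp⟩
    · exact ⟨by simp, u, huv.symm, by simp⟩
end InducedArboricity
end
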